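/- arXiv:1509.03871 — 3 statements merged into one kernel-verified Lean document; each statement's English description precedes it below -/
import Mathlib

section
/- For every δ > 0 there is a constant C_δ such that for every even positive integer f and every positive integer w, the number of gluing stories g ∈ GS(f) for which the quotient complex X(g) is simplicially isomorphic to a connected triangulated closed surface with w vertices is at most C_δ^f · f^{3f} · w^{−(1−δ)w}. -/
/-- A connected triangulated closed surface on the vertex set `Fin w`, given by its
(nonempty) set `F` of 3-element faces: every edge lies in exactly two faces, the link
of every vertex is connected, any two faces are joined by a chain of faces in which
consecutive faces share an edge, and every vertex lies in some face. -/
def IsClosedSurface {w : ℕ} (F : Finset (Finset (Fin w))) : Prop :=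
  F.Nonempty ∧
  (∀ t ∈ F, t.card = 3) ∧
  (∀ e : Finset (Fin w), e.card = 2 → (∃ t ∈ F, e ⊆ t) →
    (F.filter (fun t => e ⊆ t)).card = 2) ∧
  (∀ v : Fin w, ∃ t ∈ F, v ∈ t) ∧
  (∀ v a b : Fin w,
    (∃ t ∈ F, v ∈ t ∧ a ∈ t ∧ a ≠ v) → (∃ t ∈ F, v ∈ t ∧ b ∈ t ∧ b ≠ v) →
    Relation.ReflTransGen (fun x y => ({v, x, y} : Finset (Fin w)) ∈ F) a b) ∧
  (∀ t ∈ F, ∀ t' ∈ F,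
    Relation.ReflTransGen (fun s s' => s ∈ F ∧ s' ∈ F ∧ (s ∩ s').card = 2) t t')

/-- A gluing story on `f` labelled triangles. Each triangle `j : Fin f` has three edge
slots indexed by `Fin 3` (slot `(j,a)` is the edge opposite corner `(j,a)`, with
endpoints the corners `(j,a+1)` and `(j,a+2)`). A gluing story is a sequence of `3f/2`
gluings, each consisting of an ordered pair of distinct edge slots together with a
`Bool` selecting one of the two bijections between the endpoint pairs, such that every
one of the `3f` slots occurs in exactly one gluing. -/
def GluingStory (f : ℕ) :=
  {g : Fin (3 * f / 2) → (Fin f × Fin 3) × (Fin f × Fin 3) × Bool //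
    (∀ k, (g k).1 ≠ (g k).2.1) ∧
    ∀ s : Fin f × Fin 3, ∃! k, s = (g k).1 ∨ s = (g k).2.1}

/-- The identifications of corners prescribed by the gluings of a gluing story: the
slot `(j,a)` has endpoint corners `(j,a+1)` and `(j,a+2)`, and each gluing identifies
the endpoints of its two slots according to the chosen bijection (the `Bool`). The
equivalence relation generated by this relation defines the vertices of the quotient
complex. -/
def cornerRel {f : ℕ} (g : GluingStory f) : Fin f × Fin 3 → Fin f × Fin 3 → Prop :=
  fun x y => ∃ k : Fin (3 * f / 2),
    (x = ((g.1 k).1.1, (g.1 k).1.2 + 1) ∧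
      y = ((g.1 k).2.1.1, (g.1 k).2.1.2 + (if (g.1 k).2.2 then 2 else 1))) ∨
    (x = ((g.1 k).1.1, (g.1 k).1.2 + 2) ∧
      y = ((g.1 k).2.1.1, (g.1 k).2.1.2 + (if (g.1 k).2.2 then 1 else 2)))

/-- `X(g)` is simplicially isomorphic to the complex `F` on `Fin w`: there is a
bijection `φ` from the `cornerRel`-classes to `Fin w` under which, for each triangle
`j`, the classes of its three corners are distinct and form a face of `F`, and
`j ↦ face` is a bijection between the `f` triangles and the faces of `F`. -/
def IsoToSurface {f w : ℕ} (g : GluingStory f) (F : Finset (Finset (Fin w))) : Prop :=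
  ∃ φ : Quot (cornerRel g) → Fin w, Function.Bijective φ ∧
    (∀ j : Fin f,
      ({φ (Quot.mk _ (j, 0)), φ (Quot.mk _ (j, 1)), φ (Quot.mk _ (j, 2))} :
        Finset (Fin w)).card = 3 ∧
      ({φ (Quot.mk _ (j, 0)), φ (Quot.mk _ (j, 1)), φ (Quot.mk _ (j, 2))} :
        Finset (Fin w)) ∈ F) ∧
    Function.Injective (fun j : Fin f =>
      ({φ (Quot.mk _ (j, 0)), φ (Quot.mk _ (j, 1)), φ (Quot.mk _ (j, 2))} :
        Finset (Fin w))) ∧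
    Finset.image (fun j : Fin f =>
      ({φ (Quot.mk _ (j, 0)), φ (Quot.mk _ (j, 1)), φ (Quot.mk _ (j, 2))} :
        Finset (Fin w))) Finset.univ = F



namespace GS

abbrev Flag (f : ℕ) := (Fin f × Fin 3) × Bool

def corner {f : ℕ} (x : Flag f) : Fin f × Fin 3 :=
  (x.1.1, x.1.2 + (if x.2 then 2 else 1))

def al {f : ℕ} (x : Flag f) : Flag f :=
  ((x.1.1, x.1.2 + (if x.2 then 1 else 2)), !x.2)

def ga {f : ℕ} (x : Flag f) : Flag f := (x.1, !x.2)

lemma fin3a : ∀ (a : Fin 3) (b : Bool), (a + if b = true then 1 else 2) +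
    (if (!b) = true then 2 else 1) = a + if b = true then 2 else 1 := by decide

lemma fin3b : ∀ (a : Fin 3) (b : Bool), (a + if b = true then 1 else 2) +
    (if (!b) = true then 1 else 2) = a := by decide

lemma fin3c : ∀ a : Fin 3, a + 2 + 1 = a ∧ a + 2 + 2 = a + 1 := by decide

lemma fin3d : ∀ a : Fin 3, a + 1 + 2 = a ∧ a + 1 + 1 = a + 2 := by decide

lemma corner_al {f : ℕ} (x : Flag f) : corner (al x) = corner x := by
  obtain ⟨⟨j, a⟩, b⟩ := x
  refine Prod.ext rfl ?_
  exact fin3a a b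

lemma al_al {f : ℕ} (x : Flag f) : al (al x) = x := by
  obtain ⟨⟨j, a⟩, b⟩ := x
  refine Prod.ext (Prod.ext rfl ?_) ?_
  · exact fin3b a b
  · simp [al]

lemma al_ne {f : ℕ} (x : Flag f) : al x ≠ x := by
  intro h
  have := congrArg Prod.snd h
  simp [al] at this

lemma ga_ga {f : ℕ} (x : Flag f) : ga (ga x) = x := by
  simp [ga]

noncomputable def kOf {f : ℕ} (g : GluingStory f) (s : Fin f × Fin 3) : Fin (3 * f / 2) :=
  (g.2.2 s).choose

lemma kOf_spec {f : ℕ} (g : GluingStory f) (s : Fin f × Fin 3) :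
    s = (g.1 (kOf g s)).1 ∨ s = (g.1 (kOf g s)).2.1 :=
  (g.2.2 s).choose_spec.1

lemma kOf_eq {f : ℕ} (g : GluingStory f) (s : Fin f × Fin 3) (k : Fin (3 * f / 2))
    (h : s = (g.1 k).1 ∨ s = (g.1 k).2.1) : kOf g s = k :=
  ((g.2.2 s).choose_spec.2 k h).symm

open Classical in
noncomputable def be {f : ℕ} (g : GluingStory f) (x : Flag f) : Flag f :=
  if x.1 = (g.1 (kOf g x.1)).1 then
    ((g.1 (kOf g x.1)).2.1, xor x.2 (g.1 (kOf g x.1)).2.2)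
  else ((g.1 (kOf g x.1)).1, xor x.2 (g.1 (kOf g x.1)).2.2)

lemma be_left {f : ℕ} (g : GluingStory f) (k : Fin (3 * f / 2)) (b : Bool) :
    be g ((g.1 k).1, b) = ((g.1 k).2.1, xor b (g.1 k).2.2) := by
  have := kOf_eq g (g.1 k).1 k (Or.inl rfl)
  simp [be, this]

lemma be_right {f : ℕ} (g : GluingStory f) (k : Fin (3 * f / 2)) (b : Bool) :
    be g ((g.1 k).2.1, b) = ((g.1 k).1, xor b (g.1 k).2.2) := by
  have := kOf_eq g (g.1 k).2.1 k (Or.inr rfl)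
  have h2 := (g.2.1 k).symm
  simp [be, this, h2]

lemma flag_cases {f : ℕ} (g : GluingStory f) (x : Flag f) :
    ∃ k b, kOf g x.1 = k ∧ (x = ((g.1 k).1, b) ∨ x = ((g.1 k).2.1, b)) := by
  refine ⟨kOf g x.1, x.2, rfl, ?_⟩
  rcases kOf_spec g x.1 with h | h
  · left; exact Prod.ext h rfl
  · right; exact Prod.ext h rfl

lemma be_be {f : ℕ} (g : GluingStory f) (x : Flag f) : be g (be g x) = x := by
  obtain ⟨k, b, -, h | h⟩ := flag_cases g x <;> subst h
  · rw [be_left, be_right]; simp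
  · rw [be_right, be_left]; simp

lemma be_ne {f : ℕ} (g : GluingStory f) (x : Flag f) : be g x ≠ x := by
  obtain ⟨k, b, -, h | h⟩ := flag_cases g x <;> subst h
  · rw [be_left]; intro h; exact g.2.1 k (congrArg Prod.fst h).symm
  · rw [be_right]; intro h; exact g.2.1 k (congrArg Prod.fst h)

lemma be_ga {f : ℕ} (g : GluingStory f) (x : Flag f) : be g (ga x) = ga (be g x) := by
  obtain ⟨k, b, -, h | h⟩ := flag_cases g x <;> subst h
  · simp [ga, be_left]
  · simp [ga, be_right]

lemma kOf_same {f : ℕ} (g : GluingStory f) (x y : Flag f) (h : kOf g x.1 = kOf g y.1) :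
    x = y ∨ x = be g y ∨ x = ga y ∨ x = ga (be g y) := by
  obtain ⟨k, b, hk, hx⟩ := flag_cases g x
  obtain ⟨k', b', hk', hy⟩ := flag_cases g y
  have : k = k' := by rw [← hk, ← hk', h]
  subst this
  clear hk hk' h
  rcases hx with hx | hx <;> rcases hy with hy | hy <;> subst hx <;> subst hy <;>
    simp only [be_left, be_right, ga] <;>
    cases b <;> cases b' <;> cases (g.1 k).2.2 <;> simp

def cls {f : ℕ} (g : GluingStory f) (x : Flag f) : Quot (cornerRel g) :=
  Quot.mk _ (corner x)

lemma cls_al {f : ℕ} (g : GluingStory f) (x : Flag f) : cls g (al x) = cls g x := by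
  simp [cls, corner_al]

lemma cls_be {f : ℕ} (g : GluingStory f) (x : Flag f) : cls g (be g x) = cls g x := by
  have key : ∀ k b, cls g ((g.1 k).1, b) = cls g (be g ((g.1 k).1, b)) := by
    intro k b
    rw [be_left]
    apply Quot.sound
    refine ⟨k, ?_⟩
    cases b
    · left; simp [corner]
    · right
      cases h : (g.1 k).2.2 <;> simp [corner]
  obtain ⟨k, b, -, h | h⟩ := flag_cases g x <;> subst h
  · exact (key k b).symm
  · have := key k (xor b (g.1 k).2.2)
    rw [← be_right, be_be] at this
    exact this

/-- parity -/
lemma even_of_invol {α : Type*} [DecidableEq α] (s : Finset α) (σ : α → α)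
    (h1 : ∀ x ∈ s, σ x ∈ s) (h2 : ∀ x ∈ s, σ (σ x) = x) (h3 : ∀ x ∈ s, σ x ≠ x) :
    ((s.card : ℕ) : ZMod 2) = 0 := by
  have := Finset.sum_involution (s := s) (f := fun _ => (1 : ZMod 2)) (fun a _ => σ a)
    (fun a ha => by decide) (fun a ha _ => h3 a ha) (fun a ha => h1 a ha)
    (fun a ha => h2 a ha)
  simpa using this

structure Dat {f : ℕ} (w : ℕ) (g : GluingStory f) (P : Finset (Flag f))
    (K : Finset (Fin (3 * f / 2))) : Prop where
  cardK : K.card = w - 1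
  Kmem : ∀ k ∈ K, ∃ x ∈ P, kOf g x.1 = k
  inv : ∀ x ∈ P, be g x ∈ P
  two : ∀ x ∈ P, ∀ y ∈ P, cls g x = cls g y → y = x ∨ y = be g x
  dep : ∃ d : Quot (cornerRel g) → ℕ, ∀ x ∈ P, d (cls g (ga x)) < d (cls g x)

lemma be_unique {f w : ℕ} (g g' : GluingStory f) (P : Finset (Flag f))
    (K : Finset (Fin (3 * f / 2))) (D : Dat w g P K) (D' : Dat w g' P K)
    (hK : ∀ k, k ∉ K → g.1 k = g'.1 k) : be g = be g' := by
  classical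
  obtain ⟨d, hd⟩ := D.dep
  have h1 : ∀ x, x ∉ P → ga x ∉ P → be g x = be g' x := by
    intro x hx hgx
    have hk : kOf g x.1 ∉ K := by
      intro hk
      obtain ⟨y, hy, hyk⟩ := D.Kmem _ hk
      rcases kOf_same g x y hyk.symm with h | h | h | h
      · exact hx (h ▸ hy)
      · exact hx (h ▸ D.inv y hy)
      · exact hgx (by rw [h, ga_ga]; exact hy)
      · exact hgx (by rw [h, ga_ga]; exact D.inv y hy)
    obtain ⟨k, b, hkx, h | h⟩ := flag_cases g x
    · rw [hkx] at hk
      have e := hK k hk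
      rw [h, be_left, e, be_left]
    · rw [hkx] at hk
      have e := hK k hk
      rw [h, be_right, e, be_right]
  have h2 : ∀ N : ℕ, ∀ x ∈ P, (Finset.univ.sup (fun y => d (cls g y))) - d (cls g x) = N →
      be g x = be g' x := by
    intro N
    induction N using Nat.strong_induction_on with
    | _ N ih =>
    intro x hx hN
    have hle : ∀ y, d (cls g y) ≤ Finset.univ.sup (fun y => d (cls g y)) := fun y =>
      Finset.le_sup (f := fun y => d (cls g y)) (Finset.mem_univ y)
    have hag : ∀ y, cls g y = cls g x → y ∉ P → be g y = be g' y := by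
      intro y hy hyP
      by_cases hgy : ga y ∈ P
      · have h3 := hd _ hgy
        rw [ga_ga, hy] at h3
        have h4 := hle (ga y)
        have h5 := ih _ (by omega) (ga y) hgy rfl
        rw [be_ga, be_ga] at h5
        have := congrArg ga h5
        rwa [ga_ga, ga_ga] at this
      · exact h1 y hyP hgy
    let R : Flag f → Flag f → Prop := fun a b => b = al a ∨ (a ∉ P ∧ b = be g a)
    have hcl : ∀ y, Relation.ReflTransGen R x y → cls g y = cls g x ∧ cls g' y = cls g' x := by
      intro y hy
      induction hy with
      | refl => exact ⟨rfl, rfl⟩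
      | tail _ hab ih2 =>
        rcases hab with h | ⟨hP, h⟩
        · rw [h, cls_al, cls_al]; exact ih2
        · refine ⟨by rw [h, cls_be]; exact ih2.1, ?_⟩
          rw [h, hag _ ih2.1 hP, cls_be]; exact ih2.2
    by_cases hb : Relation.ReflTransGen R x (be g x)
    · rcases D'.two x hx (be g x) (D.inv x hx) (hcl _ hb).2.symm with h | h
      · exact absurd h (be_ne g x)
      · exact h
    · exfalso
      let A : Finset (Flag f) := Finset.univ.filter (fun y => Relation.ReflTransGen R x y)
      have hA : ∀ y, y ∈ A ↔ Relation.ReflTransGen R x y := by simp [A]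
      have e1 := even_of_invol A al
        (fun y hy => (hA _).2 (((hA _).1 hy).tail (Or.inl rfl)))
        (fun y _ => al_al y) (fun y _ => al_ne y)
      have hxA : x ∈ A := (hA _).2 .refl
      have e2 := even_of_invol (A.erase x) (be g)
        (fun y hy => by
          rw [Finset.mem_erase] at hy ⊢
          have hyA := (hA _).1 hy.2
          have hyP : y ∉ P := by
            intro hyP
            rcases D.two x hx y hyP (hcl _ hyA).1.symm with h | h
            · exact hy.1 h
            · exact hb (h ▸ hyA)
          refine ⟨?_, (hA _).2 (hyA.tail (Or.inr ⟨hyP, rfl⟩))⟩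
          intro h
          apply hb
          have h6 : be g x = y := by rw [← h, be_be]
          rw [h6]; exact hyA)
        (fun y _ => be_be g y) (fun y _ => be_ne g y)
      have e3 := Finset.card_erase_add_one hxA
      rw [← e3] at e1
      push_cast at e1
      rw [e2] at e1
      revert e1; decide
  funext x
  by_cases hx : x ∈ P
  · exact h2 _ x hx rfl
  · by_cases hgx : ga x ∈ P
    · have h5 := h2 _ _ hgx rfl
      rw [be_ga, be_ga] at h5
      have := congrArg ga h5
      rwa [ga_ga, ga_ga] at this
    · exact h1 x hx hgx

lemma story_eq {f : ℕ} (g g' : GluingStory f) (hb : be g = be g')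
    (h : ∀ k, (g.1 k).1 = (g'.1 k).1) : g = g' := by
  apply Subtype.ext
  funext k
  have h1 := be_left g k false
  have h2 := be_left g' k false
  rw [hb, h k, h2] at h1
  simp only [Bool.false_bne, Prod.mk.injEq] at h1
  exact Prod.ext (h k) (Prod.ext h1.1.symm h1.2.symm)

def gr {f : ℕ} (g : GluingStory f) : SimpleGraph (Quot (cornerRel g)) :=
  SimpleGraph.fromRel (fun u v => ∃ x, cls g x = u ∧ cls g (ga x) = v)

lemma tri_flag {f : ℕ} (j : Fin f) (a b : Fin 3) (h : a ≠ b) :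
    ∃ x : Flag f, corner x = (j, a) ∧ corner (ga x) = (j, b) := by
  by_cases h2 : b = a + 1
  · refine ⟨((j, a + 2), false), ?_⟩
    subst h2
    exact ⟨Prod.ext rfl (fin3c a).1, Prod.ext rfl (fin3c a).2⟩
  · have h3 : b = a + 2 := by
      revert a b; decide
    refine ⟨((j, a + 1), true), ?_⟩
    subst h3
    exact ⟨Prod.ext rfl (fin3d a).1, Prod.ext rfl (fin3d a).2⟩

lemma tri_reach {f : ℕ} (g : GluingStory f) (j : Fin f) (a b : Fin 3) :
    (gr g).Reachable (Quot.mk _ (j, a)) (Quot.mk _ (j, b)) := by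
  by_cases h : (Quot.mk (cornerRel g) (j, a)) = Quot.mk _ (j, b)
  · rw [h]
  · apply SimpleGraph.Adj.reachable
    have hab : a ≠ b := by rintro rfl; exact h rfl
    obtain ⟨x, hx1, hx2⟩ := tri_flag j a b hab
    refine (SimpleGraph.fromRel_adj _ _ _).2 ⟨h, Or.inl ⟨x, ?_, ?_⟩⟩
    · simp [cls, hx1]
    · simp [cls, hx2]

lemma conn {f w : ℕ} (g : GluingStory f) (F : Finset (Finset (Fin w)))
    (hF : IsClosedSurface F) (hI : IsoToSurface g F) (u v : Quot (cornerRel g)) :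
    (gr g).Reachable u v := by
  obtain ⟨φ, hφ, h1, -, h3⟩ := hI
  obtain ⟨-, -, -, -, -, hch⟩ := hF
  set face : Fin f → Finset (Fin w) := fun j =>
    ({φ (Quot.mk _ (j, 0)), φ (Quot.mk _ (j, 1)), φ (Quot.mk _ (j, 2))} : Finset (Fin w))
    with hface
  have hmem : ∀ j p, p ∈ face j → ∃ a, p = φ (Quot.mk _ (j, a)) := by
    intro j p hp
    simp only [hface, Finset.mem_insert, Finset.mem_singleton] at hp
    rcases hp with h | h | h
    exacts [⟨_, h⟩, ⟨_, h⟩, ⟨_, h⟩]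
  have key : ∀ j t', Relation.ReflTransGen (fun s s' => s ∈ F ∧ s' ∈ F ∧ (s ∩ s').card = 2)
      (face j) t' → ∀ j', t' = face j' → ∀ a b,
      (gr g).Reachable (Quot.mk _ (j, a)) (Quot.mk _ (j', b)) := by
    have step : ∀ j j', (face j ∩ face j').Nonempty → ∀ a b,
        (gr g).Reachable (Quot.mk _ (j, a)) (Quot.mk _ (j', b)) := by
      rintro j j' ⟨p, hp⟩ a b
      rw [Finset.mem_inter] at hp
      obtain ⟨c, hc⟩ := hmem _ _ hp.1
      obtain ⟨c', hc'⟩ := hmem _ _ hp.2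
      have e := hφ.1 (hc.symm.trans hc')
      refine (tri_reach g j a c).trans ?_
      rw [e]
      exact tri_reach g j' c' b
    intro j t' ht
    induction ht with
    | refl =>
      intro j' hj' a b
      apply step
      rw [← hj', Finset.inter_self]
      exact ⟨φ (Quot.mk _ (j, 0)), by simp [hface]⟩
    | tail _ hab ih =>
      intro j' hj' a b
      obtain ⟨hs, hs', hc⟩ := hab
      rw [← h3, Finset.mem_image] at hs
      obtain ⟨j1, -, hj1⟩ := hs
      refine (ih j1 hj1.symm a 0).trans (step j1 j' ?_ 0 b)
      rw [← hj', ← Finset.card_pos]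
      have : face j1 = _ := hj1
      rw [this, hc]; norm_num
  induction u using Quot.ind with | _ u =>
  induction v using Quot.ind with | _ v =>
  exact key u.1 _ (hch _ (h1 u.1).2 _ (h1 v.1).2) v.1 rfl u.2 v.2

lemma closer {V : Type*} (G : SimpleGraph V) (r v : V) (h : G.Reachable v r) (hv : v ≠ r) :
    ∃ u, G.Adj v u ∧ G.dist u r < G.dist v r := by
  obtain ⟨p, hp⟩ := h.exists_walk_length_eq_dist
  cases p with
  | nil => exact absurd rfl hv
  | cons hadj q =>
    refine ⟨_, hadj, ?_⟩
    have := SimpleGraph.dist_le q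
    simp at hp
    omega

lemma exists_dat {f w : ℕ} (hf : 0 < f) (g : GluingStory f) (F : Finset (Finset (Fin w)))
    (hF : IsClosedSurface F) (hI : IsoToSurface g F) : ∃ PK : Finset (Flag f) ×
      Finset (Fin (3 * f / 2)), Dat w g PK.1 PK.2 := by
  classical
  have hc := conn g F hF hI
  obtain ⟨φ, hφ, -⟩ := hI
  let r : Quot (cornerRel g) := Quot.mk _ (⟨0, hf⟩, 0)
  have hX : ∀ v : {v // v ≠ r}, ∃ x, cls g x = v.1 ∧
      (gr g).dist (cls g (ga x)) r < (gr g).dist v.1 r := by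
    rintro ⟨v, hv⟩
    obtain ⟨u, hadj, hlt⟩ := closer (gr g) r v (hc v r) hv
    rcases ((SimpleGraph.fromRel_adj _ _ _).1 hadj).2 with ⟨x, h1, h2⟩ | ⟨x, h1, h2⟩
    · exact ⟨x, h1, h2 ▸ hlt⟩
    · exact ⟨ga x, h2, by rw [ga_ga, h1]; exact hlt⟩
  choose X hX1 hX2 using hX
  have : Fintype (Quot (cornerRel g)) := Fintype.ofBijective
    (Equiv.ofBijective φ hφ).symm (Equiv.bijective _)
  have hcard : Fintype.card (Quot (cornerRel g)) = w := by
    rw [Fintype.card_of_bijective hφ, Fintype.card_fin]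
  let P : Finset (Flag f) := Finset.univ.filter (fun x => ∃ v, x = X v ∨ x = be g (X v))
  have hP : ∀ x, x ∈ P ↔ ∃ v, x = X v ∨ x = be g (X v) := by simp [P]
  have hd : ∀ x ∈ P, (gr g).dist (cls g (ga x)) r < (gr g).dist (cls g x) r := by
    intro x hx
    obtain ⟨v, h | h⟩ := (hP x).1 hx
    · rw [h, hX1]; exact hX2 v
    · rw [h, ← be_ga, cls_be, cls_be, hX1]; exact hX2 v
  have hinv : ∀ x ∈ P, be g x ∈ P := by
    intro x hx
    obtain ⟨v, h | h⟩ := (hP x).1 hx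
    · exact (hP _).2 ⟨v, Or.inr (by rw [h])⟩
    · exact (hP _).2 ⟨v, Or.inl (by rw [h, be_be])⟩
  have hXP : ∀ v, X v ∈ P := fun v => (hP _).2 ⟨v, Or.inl rfl⟩
  have hga : ∀ x ∈ P, ga x ∉ P := by
    intro x hx hgx
    have h1 := hd x hx
    have h2 := hd _ hgx
    rw [ga_ga] at h2
    omega
  have hinj : Function.Injective (fun v => kOf g (X v).1) := by
    intro u v huv
    apply Subtype.ext
    rcases kOf_same g _ _ huv with h | h | h | h
    · rw [← hX1 u, h, hX1 v]
    · rw [← hX1 u, h, cls_be, hX1 v]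
    · exact absurd (h ▸ hXP u) (hga _ (hXP v))
    · exact absurd (h ▸ hXP u) (hga _ (hinv _ (hXP v)))
  refine ⟨(P, Finset.univ.image (fun v => kOf g (X v).1)), ?_, ?_, hinv, ?_, ⟨fun q => (gr g).dist q r, hd⟩⟩
  · rw [Finset.card_image_of_injective _ hinj, Finset.card_univ,
      Fintype.card_subtype_compl, hcard, Fintype.card_subtype_eq]
  · intro k hk
    obtain ⟨v, -, h⟩ := Finset.mem_image.1 hk
    exact ⟨X v, hXP v, h⟩
  · intro x hx y hy hxy
    obtain ⟨v, hv⟩ := (hP x).1 hx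
    obtain ⟨u, hu⟩ := (hP y).1 hy
    have e1 : cls g x = v.1 := by
      rcases hv with h | h
      · rw [h, hX1]
      · rw [h, cls_be, hX1]
    have e2 : cls g y = u.1 := by
      rcases hu with h | h
      · rw [h, hX1]
      · rw [h, cls_be, hX1]
    have : v = u := Subtype.ext (by rw [← e1, ← e2, hxy])
    subst this
    rcases hv with h | h <;> rcases hu with h' | h' <;> rw [h, h'] <;> simp [be_be]

instance (f : ℕ) : Finite (GluingStory f) := by unfold GluingStory; infer_instance

lemma fiber {f w : ℕ} (PK : Finset (Flag f) × Finset (Fin (3 * f / 2)))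
    (S : Finset (GluingStory f)) (hS : ∀ g ∈ S, Dat w g PK.1 PK.2) :
    S.card ≤ (3 * f) ^ (3 * f / 2) * (6 * f) ^ (3 * f / 2 - (w - 1)) := by
  classical
  rcases S.eq_empty_or_nonempty with h | ⟨g0, hg0⟩
  · simp [h]
  have hK := (hS g0 hg0).cardK
  let c : GluingStory f → (Fin (3 * f / 2) → Fin f × Fin 3) ×
      ({k // k ∉ PK.2} → (Fin f × Fin 3) × Bool) :=
    fun g => (fun k => (g.1 k).1, fun k => (g.1 k.1).2)
  have hc : Set.InjOn c S := by
    intro g hg g' hg' h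
    have h1 : ∀ k, (g.1 k).1 = (g'.1 k).1 := fun k => congrFun (congrArg Prod.fst h) k
    refine story_eq g g' (be_unique g g' _ _ (hS g hg) (hS g' hg') ?_) h1
    intro k hk
    exact Prod.ext (h1 k) (congrFun (congrArg Prod.snd h) ⟨k, hk⟩)
  have := Finset.card_le_card_of_injOn c (t := Finset.univ) (by simp) hc
  refine this.trans (le_of_eq ?_)
  rw [Finset.card_univ]
  simp only [Fintype.card_prod, Fintype.card_fun, Fintype.card_fin, Fintype.card_bool,
    Fintype.card_subtype_compl, Fintype.card_coe, hK]
  congr 2 <;> ring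

lemma count {f w : ℕ} (hf : 0 < f) :
    Nat.card {g : GluingStory f //
          ∃ F : Finset (Finset (Fin w)), IsClosedSurface F ∧ IsoToSurface g F} ≤
      (3 * f) ^ (3 * f / 2) * (6 * f) ^ (3 * f / 2 - (w - 1)) *
        (2 ^ (6 * f) * 2 ^ (3 * f / 2)) := by
  classical
  have : Fintype (GluingStory f) := Fintype.ofFinite _
  rw [Nat.card_eq_fintype_card, Fintype.card_subtype]
  have hex : ∀ g : GluingStory f, ∃ PK : Finset (Flag f) × Finset (Fin (3 * f / 2)),
      (∃ F : Finset (Finset (Fin w)), IsClosedSurface F ∧ IsoToSurface g F) →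
      Dat w g PK.1 PK.2 := by
    intro g
    by_cases h : ∃ F : Finset (Finset (Fin w)), IsClosedSurface F ∧ IsoToSurface g F
    · obtain ⟨F, h1, h2⟩ := h
      obtain ⟨PK, h3⟩ := exists_dat hf g F h1 h2
      exact ⟨PK, fun _ => h3⟩
    · exact ⟨(∅, ∅), fun h' => absurd h' h⟩
  choose pk hpk using hex
  have := Finset.card_le_mul_card_image_of_maps_to (f := pk)
    (s := Finset.univ.filter (fun g : GluingStory f =>
      ∃ F : Finset (Finset (Fin w)), IsClosedSurface F ∧ IsoToSurface g F))
    (t := Finset.univ) (by simp)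
    ((3 * f) ^ (3 * f / 2) * (6 * f) ^ (3 * f / 2 - (w - 1))) (by
      intro PK _
      apply fiber PK
      intro g hg
      rw [Finset.mem_filter, Finset.mem_filter] at hg
      rw [← hg.2]
      exact hpk g hg.1.2)
  refine this.trans (le_of_eq ?_)
  rw [Finset.card_univ]
  simp only [Fintype.card_prod, Fintype.card_finset, Fintype.card_fin, Fintype.card_bool]
  congr 3
  ring

lemma wbound {f w : ℕ} (hf : 0 < f) (g : GluingStory f)
    (h : ∃ F : Finset (Finset (Fin w)), IsClosedSurface F ∧ IsoToSurface g F) :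
    w - 1 ≤ 3 * f / 2 := by
  obtain ⟨F, h1, h2⟩ := h
  obtain ⟨PK, D⟩ := exists_dat hf g F h1 h2
  rw [← D.cardK]
  simpa using Finset.card_le_univ PK.2

lemma countN {f w : ℕ} (hf : 0 < f) (he : Even f) (hw : 0 < w) :
    Nat.card {g : GluingStory f //
          ∃ F : Finset (Finset (Fin w)), IsClosedSurface F ∧ IsoToSurface g F} * w ^ w ≤
      (2 ^ 9 * 6 ^ 4) ^ f * f ^ (3 * f) := by
  rcases isEmpty_or_nonempty {g : GluingStory f //
          ∃ F : Finset (Finset (Fin w)), IsClosedSurface F ∧ IsoToSurface g F} with h | ⟨⟨g, hg⟩⟩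
  · simp
  have hb := wbound hf g hg
  have hn : 2 * (3 * f / 2) = 3 * f := by
    obtain ⟨m, rfl⟩ := he; omega
  have hcount := count (w := w) hf
  generalize 3 * f / 2 = n at *
  calc _ ≤ ((3 * f) ^ n * (6 * f) ^ (n - (w - 1)) * (2 ^ (6 * f) * 2 ^ n)) * (6 * f) ^ w := by
        gcongr
        omega
    _ ≤ ((6 * f) ^ n * (6 * f) ^ (n - (w - 1)) * (2 ^ (6 * f) * 2 ^ (2 * f))) * (6 * f) ^ w := by
        gcongr <;> omega
    _ = (6 * f) ^ (n + (n - (w - 1)) + w) * 2 ^ (8 * f) := by ring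
    _ = (6 * f) ^ (3 * f + 1) * 2 ^ (8 * f) := by congr 2; omega
    _ = 6 ^ (3 * f + 1) * f * 2 ^ (8 * f) * f ^ (3 * f) := by rw [mul_pow]; ring
    _ ≤ 6 ^ (4 * f) * 2 ^ f * 2 ^ (8 * f) * f ^ (3 * f) := by
        gcongr
        · norm_num
        · omega
        · exact Nat.lt_two_pow_self.le
    _ = _ := by
        rw [mul_pow, ← pow_mul, ← pow_mul]; ring

end GS

/-- **Lemma (gluing stories with many vertices are rare).**
For every `δ > 0` there is a constant `C_δ` such that for every even positive integer
`f` and every positive integer `w`, the number of gluing stories `g ∈ GS(f)` whose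
quotient complex `X(g)` is simplicially isomorphic to a connected triangulated closed
surface with `w` vertices is at most `C_δ^f · f^(3f) · w^(-(1-δ)w)`. -/
theorem gluingStory_many_vertices_count (δ : ℝ) (hδ : 0 < δ) :
    ∃ C : ℝ, 0 < C ∧ ∀ f w : ℕ, 0 < f → Even f → 0 < w →
      (Nat.card {g : GluingStory f //
          ∃ F : Finset (Finset (Fin w)), IsClosedSurface F ∧ IsoToSurface g F} : ℝ) ≤
        C ^ f * (f : ℝ) ^ (3 * (f : ℝ)) * (w : ℝ) ^ (-(1 - δ) * w) := by
  refine ⟨2 ^ 9 * 6 ^ 4, by norm_num, ?_⟩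
  intro f w hf he hw
  have h := GS.countN (w := w) hf he hw
  have h' : (Nat.card {g : GluingStory f //
          ∃ F : Finset (Finset (Fin w)), IsClosedSurface F ∧ IsoToSurface g F} : ℝ) *
          (w : ℝ) ^ w ≤ (2 ^ 9 * 6 ^ 4) ^ f * (f : ℝ) ^ (3 * f) := by
    exact_mod_cast h
  have hw1 : (1 : ℝ) ≤ w := by exact_mod_cast hw
  have hw0 : (0 : ℝ) < w := by linarith
  have e1 : (f : ℝ) ^ (3 * (f : ℝ)) = (f : ℝ) ^ (3 * f) := by
    rw [← Real.rpow_natCast]; push_cast; rfl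
  have e2 : ((w : ℝ) ^ w)⁻¹ ≤ (w : ℝ) ^ (-(1 - δ) * w) := by
    rw [← Real.rpow_natCast, ← Real.rpow_neg hw0.le]
    apply Real.rpow_le_rpow_of_exponent_le hw1
    nlinarith
  rw [e1]
  have hp : (0 : ℝ) < (w : ℝ) ^ w := by positivity
  calc _ ≤ (2 ^ 9 * 6 ^ 4) ^ f * (f : ℝ) ^ (3 * f) * ((w : ℝ) ^ w)⁻¹ := by
        rw [← div_eq_mul_inv, le_div_iff₀ hp]; exact h'
    _ ≤ _ := by gcongr
end

section
/- Let β > 0 and let n be a positive integer. If H is a simple graph on fewer than n vertices with at least n^{1+β} edges, then H contains a cycle of length at most 2⌈1/β⌉ + 1. -/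
open Classical in
theorem mb_cycle {V : Type} (G : SimpleGraph V) (v : V) (par : V → V) (P : V → Prop) (e : Sym2 V)
    (hpar : ∀ w, w ≠ v → P w → G.Adj w (par w) ∧ P (par w) ∧ G.dist v (par w) < G.dist v w ∧
      s(w, par w) ≠ e) :
    ∀ d w, P w → G.dist v w ≤ d → ∃ p : G.Walk w v, e ∉ p.edges ∧ p.length ≤ d := by
  intro d
  induction d with
  | zero =>
    intro w hw hd
    by_cases h : w = v
    · subst h
      exact ⟨SimpleGraph.Walk.nil, by simp, by simp⟩
    · have := hpar w h hw
      omega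
  | succ d ih =>
    intro w hw hd
    by_cases h : w = v
    · subst h
      exact ⟨SimpleGraph.Walk.nil, by simp, by simp⟩
    · obtain ⟨h1, h2, h3, h4⟩ := hpar w h hw
      obtain ⟨p, hp, hl⟩ := ih (par w) h2 (by omega)
      refine ⟨SimpleGraph.Walk.cons h1 p, ?_, by simpa using hl⟩
      simp only [SimpleGraph.Walk.edges_cons, List.mem_cons, not_or]
      exact ⟨fun h => h4 h.symm, hp⟩

theorem mb_par {V : Type} (G : SimpleGraph V) (v w : V) (hw : w ≠ v) (hr : G.Reachable v w) :
    ∃ u, G.Adj w u ∧ G.Reachable v u ∧ G.dist v u < G.dist v w := by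
  obtain ⟨p, hp⟩ := hr.symm.exists_walk_length_eq_dist
  cases p with
  | nil => exact absurd rfl hw
  | cons h q =>
    refine ⟨_, h, q.reachable.symm, ?_⟩
    have := SimpleGraph.dist_le q
    simp only [SimpleGraph.Walk.length_cons] at hp
    rw [SimpleGraph.dist_comm, G.dist_comm (u := v) (v := w)]
    omega

open Classical in
theorem mb_main {V : Type} [Fintype V] (H : SimpleGraph V) (a : ℝ) (ha : 0 ≤ a) (k : ℕ)
    (hne : Nonempty V) (hE : a * Fintype.card V ≤ H.edgeFinset.card)
    (hno : ¬ ∃ (v : V) (c : H.Walk v v), c.IsCycle ∧ c.length ≤ 2 * k + 1) :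
    a ^ k ≤ Fintype.card V := by
  let E : Finset V → Finset (Sym2 V) := fun S => H.edgeFinset.filter (fun e => ∀ x ∈ e, x ∈ S)
  obtain ⟨S, hS, hmin⟩ := Finset.exists_min_image
    (Finset.univ.filter (fun S : Finset V => S.Nonempty ∧ a * S.card ≤ (E S).card))
    Finset.card ⟨Finset.univ, by
      simp only [Finset.mem_filter, Finset.mem_univ, true_and]
      refine ⟨Finset.univ_nonempty, ?_⟩
      have : E Finset.univ = H.edgeFinset := by simp [E]
      rw [this]; simpa using hE⟩
  simp only [Finset.mem_filter, Finset.mem_univ, true_and, and_imp] at hS hmin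
  obtain ⟨⟨v, hv⟩, hSE⟩ := hS
  have htouch : ∀ T ⊆ S, a * T.card ≤ ((E S).filter (fun e => ∃ x ∈ e, x ∈ T)).card := by
    intro T hT
    rcases T.eq_empty_or_nonempty with rfl | hTn
    · simp
    have h1 : ((E (S \ T)).card : ℝ) ≤ a * (S \ T).card := by
      by_contra hc
      push Not at hc
      have hlt : (S \ T).card < S.card :=
        Finset.card_lt_card (Finset.sdiff_ssubset hT hTn)
      rcases (S \ T).eq_empty_or_nonempty with h0 | h0
      · rw [h0] at hc
        have : E ∅ = ∅ := by
          ext e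
          induction e with | _ x y => simpa [E] using fun _ => ⟨x, fun h => absurd rfl h⟩
        simp [this] at hc
      · have := hmin _ h0 hc.le
        omega
    have h2 : (E S).card ≤ (E (S \ T)).card + ((E S).filter (fun e => ∃ x ∈ e, x ∈ T)).card := by
      refine (Finset.card_le_card ?_).trans (Finset.card_union_le _ _)
      intro e he
      simp only [E, Finset.mem_union, Finset.mem_filter, Finset.mem_sdiff] at he ⊢
      by_cases hh : ∃ x ∈ e, x ∈ T
      · exact Or.inr ⟨he, hh⟩
      · push Not at hh
        exact Or.inl ⟨he.1, fun x hx => ⟨he.2 x hx, hh x hx⟩⟩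
    have h3 : ((S \ T).card : ℝ) + T.card = S.card := by
      exact_mod_cast Finset.card_sdiff_add_card_eq_card hT
    have h2' : ((E S).card : ℝ) ≤ (E (S \ T)).card +
      ((E S).filter (fun e => ∃ x ∈ e, x ∈ T)).card := by exact_mod_cast h2
    rw [← h3] at hSE
    linarith
  let G : SimpleGraph V := 
    { Adj := fun x y => H.Adj x y ∧ x ∈ S ∧ y ∈ S
      symm := ⟨fun x y h => ⟨h.1.symm, h.2.2, h.2.1⟩⟩
      loopless := ⟨fun x h => H.loopless.irrefl x h.1⟩ }
  have hGH : G ≤ H := fun x y h => h.1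
  have hpar : ∀ w, ∃ u, w ≠ v → G.Reachable v w →
      G.Adj w u ∧ G.Reachable v u ∧ G.dist v u < G.dist v w := by
    intro w
    by_cases h : w ≠ v ∧ G.Reachable v w
    · obtain ⟨u, hu⟩ := mb_par G v w h.1 h.2
      exact ⟨u, fun _ _ => hu⟩
    · exact ⟨v, fun h1 h2 => absurd ⟨h1, h2⟩ h⟩
  choose par hpar using hpar
  let B : ℕ → Finset V := fun r => S.filter (fun w => G.Reachable v w ∧ G.dist v w ≤ r)
  have hstep : ∀ r, r + 1 ≤ k → a * (B r).card ≤ (B (r+1)).card := by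
    intro r hr
    refine (htouch (B r) (Finset.filter_subset _ _)).trans ?_
    have : (E S).filter (fun e => ∃ x ∈ e, x ∈ B r) ⊆
        (B (r+1)).image (fun u => s(u, par u)) := by
      intro e he
      by_contra hcon
      apply hno
      have key : ∃ x y, e = s(x, y) ∧ G.Adj x y ∧ x ∈ B r := by
        simp only [E, Finset.mem_filter, SimpleGraph.mem_edgeFinset] at he
        obtain ⟨⟨h1, h2⟩, x, hx, hxB⟩ := he
        obtain ⟨y, rfl⟩ := hx
        exact ⟨x, y, rfl, ⟨h1, h2 x (by simp), h2 y (by simp)⟩,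
          by simpa only [Finset.mem_filter, B] using hxB⟩
      obtain ⟨x, y, rfl, hxy, hx⟩ := key
      have hx' : x ∈ B (r+1) := by
        simp only [B, Finset.mem_filter] at hx ⊢
        exact ⟨hx.1, hx.2.1, by omega⟩
      have hy' : y ∈ B (r+1) := by
        simp only [B, Finset.mem_filter] at hx ⊢
        refine ⟨hxy.2.2, hx.2.1.trans hxy.reachable, ?_⟩
        obtain ⟨p, hp⟩ := hx.2.1.exists_walk_length_eq_dist
        have := SimpleGraph.dist_le (p.concat hxy)
        rw [SimpleGraph.Walk.length_concat] at this
        omega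
      have hc := mb_cycle G v par (fun w => w ∈ B (r+1)) s(x, y) (by
        intro w hw hwB
        have hwB' := hwB
        simp only [B, Finset.mem_filter] at hwB
        obtain ⟨h1, h2, h3⟩ := hpar w hw hwB.2.1
        refine ⟨h1, ?_, h3, ?_⟩
        · simp only [B, Finset.mem_filter]
          exact ⟨h1.2.2, h2, by omega⟩
        · intro heq
          exact hcon (Finset.mem_image.2 ⟨w, hwB', heq⟩))
      obtain ⟨p, hp, hpl⟩ := hc (r+1) x hx' (by
        simp only [B, Finset.mem_filter] at hx'; exact hx'.2.2)
      obtain ⟨q, hq, hql⟩ := hc (r+1) y hy' (by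
        simp only [B, Finset.mem_filter] at hy'; exact hy'.2.2)
      let w := (q.append p.reverse)
      have hw : s(x, y) ∉ w.edges := by
        simp [w, SimpleGraph.Walk.edges_append, hp, hq]
      have hwl : w.length ≤ 2 * (r + 1) := by
        simp only [w, SimpleGraph.Walk.length_append, SimpleGraph.Walk.length_reverse]; omega
      have hcyc : (SimpleGraph.Walk.cons hxy w.bypass).IsCycle := by
        rw [SimpleGraph.Walk.cons_isCycle_iff]
        exact ⟨w.bypass_isPath, fun h => hw (w.edges_bypass_subset h)⟩
      refine ⟨x, (SimpleGraph.Walk.cons hxy w.bypass).mapLe hGH, ?_, ?_⟩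
      · exact hcyc.mapLe hGH
      · have := w.length_bypass_le
        simp only [SimpleGraph.Walk.mapLe, SimpleGraph.Walk.length_map,
          SimpleGraph.Walk.length_cons]
        omega
    exact_mod_cast (Finset.card_le_card this).trans Finset.card_image_le
  have hB : ∀ r, r ≤ k → a ^ r ≤ (B r).card := by
    intro r
    induction r with
    | zero =>
      intro _
      have : v ∈ B 0 := by simp [B, hv]
      have := Finset.card_pos.2 ⟨v, this⟩
      simpa using this
    | succ r ih =>
      intro hr
      rw [pow_succ']
      exact (mul_le_mul_of_nonneg_left (ih (by omega)) ha).trans (hstep r hr)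
  exact (hB k le_rfl).trans (by exact_mod_cast Finset.card_le_univ _)

/-- **Lemma (Moore bound).**
Let `β > 0` and `n` a positive integer. If `H` is a simple graph on fewer than `n`
vertices with at least `n^(1+β)` edges, then `H` contains a cycle of length at most
`2⌈1/β⌉ + 1`. -/
theorem moore_bound (β : ℝ) (hβ : 0 < β) (n : ℕ) (hn : 0 < n)
    (V : Type) [Fintype V] [DecidableEq V] (H : SimpleGraph V) [DecidableRel H.Adj]
    (hV : Fintype.card V < n)
    (hE : (n : ℝ) ^ ((1 : ℝ) + β) ≤ H.edgeFinset.card) :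
    ∃ (v : V) (c : H.Walk v v), c.IsCycle ∧ c.length ≤ 2 * ⌈1 / β⌉₊ + 1 := by
  by_contra hno
  have hn0 : (0 : ℝ) < n := by exact_mod_cast hn
  have hn1 : (1 : ℝ) ≤ n := by exact_mod_cast hn
  have hne : Nonempty V := by
    by_contra h
    rw [not_nonempty_iff] at h
    have h0 : H.edgeFinset.card = 0 := by
      rw [Finset.card_eq_zero]
      ext e
      induction e with | _ x y => exact h.elim x
    rw [h0] at hE
    have := Real.rpow_pos_of_pos hn0 (1 + β)
    simp at hE
    linarith
  have hpos := Real.rpow_pos_of_pos hn0 β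
  have hVr : (Fintype.card V : ℝ) < n := by exact_mod_cast hV
  have h := mb_main H ((n : ℝ) ^ β) hpos.le ⌈1 / β⌉₊ hne (by
    rw [Real.rpow_add hn0, Real.rpow_one] at hE
    have : (n : ℝ) ^ β * Fintype.card V ≤ n * (n : ℝ) ^ β := by nlinarith
    refine this.trans (hE.trans (le_of_eq ?_))
    congr!) hno
  rw [← Real.rpow_natCast, ← Real.rpow_mul hn0.le] at h
  have h1 : (1 : ℝ) ≤ β * (⌈1 / β⌉₊ : ℝ) := by
    have := Nat.le_ceil (1 / β)
    rw [div_le_iff₀ hβ] at this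
    linarith
  have := Real.rpow_le_rpow_of_exponent_le hn1 h1
  rw [Real.rpow_one] at this
  linarith
end

section
/- Let 0 < α < 1/2 and ε > 0, and let p = n^{α−1}. Then with high probability, a random complex Y drawn from Y(n,p) satisfies Σ_τ (Fill_Y(τ))² ≥ C(n,3) · (n^{2−2α−ε})², where the sum is over all C(n,3) three-element subsets τ of {1,…,n}. -/
open scoped ENNReal

/-- The 3-element subsets of the vertex set `Fin n` (the possible faces). -/
abbrev Tri (n : ℕ) := {t : Finset (Fin n) // t.card = 3}

/-- The probability of the event `E` under the Linial–Meshulam measure `Y(n,p)`: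
a complex is a configuration `ω : Tri n → Bool` recording which faces are present
(the vertex set is `Fin n` and all edges are present), each face independently
present with probability `p`; the probability of `E` is the sum over configurations
in `E` of `∏ (p if the face is present, else 1-p)`. -/
noncomputable def lmProb (n : ℕ) (p : ℝ≥0∞) (E : Set (Tri n → Bool)) : ℝ≥0∞ :=
  ∑' ω : E, ∏ t : Tri n, (if (ω : Tri n → Bool) t then p else 1 - p)

/-- `y` is a filling of `τ` in the complex `ω`: a set of faces of `ω` such that a
2-element subset of the vertex set is contained in an odd number of members of `y`
exactly when it is a subset of `τ`. -/
def IsFilling (n : ℕ) (ω : Tri n → Bool) (τ : Finset (Fin n))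
    (y : Finset (Finset (Fin n))) : Prop :=
  (∀ t ∈ y, ∃ h : t.card = 3, ω ⟨t, h⟩ = true) ∧
  ∀ e : Finset (Fin n), e.card = 2 →
    (Odd ((y.filter (fun t => e ⊆ t)).card) ↔ e ⊆ τ)

/-- `fill n ω τ` is the filling area of `τ` in `ω`: the minimum cardinality of a
filling of `τ`, as an extended natural number (`⊤` if no filling exists). -/
noncomputable def fill (n : ℕ) (ω : Tri n → Bool) (τ : Finset (Fin n)) : ℕ∞ :=
  ⨅ y : {y : Finset (Finset (Fin n)) // IsFilling n ω τ y},
    ((y : Finset (Finset (Fin n))).card : ℕ∞)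


/-! ### Part 1: counting even closed walks -/

open scoped symmDiff in
/-- Starting at `x` with set of open edges `O`, the walk `l` returns to `v` with no open edge. -/
def Clo {n : ℕ} (v : Fin n) : Fin n → Finset (Sym2 (Fin n)) → List (Fin n) → Prop
  | x, O, [] => x = v ∧ O = ∅
  | x, O, y :: l => Clo v y (O ∆ {s(x, y)}) l

/-- Open degree. -/
def odeg {n : ℕ} (O : Finset (Sym2 (Fin n))) (x : Fin n) : ℕ :=
  (Finset.univ.filter (fun y => s(x, y) ∈ O)).card

open scoped symmDiff in
/-- Same as `Clo`, with the degree constraint. -/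
def CloD {n : ℕ} (D : Fin n → ℕ) (v : Fin n) :
    Fin n → Finset (Sym2 (Fin n)) → List (Fin n) → Prop
  | x, O, [] => x = v ∧ O = ∅
  | x, O, y :: l => odeg O x ≤ D x ∧ CloD D v y (O ∆ {s(x, y)}) l

open scoped symmDiff in
lemma odeg_step {n : ℕ} (O : Finset (Sym2 (Fin n))) (x y z : Fin n) :
    odeg (O ∆ {s(x, y)}) z ≤ odeg O z + (if z = x then 1 else 0) + (if z = y then 1 else 0) := by
  classical
  unfold odeg
  have : (Finset.univ.filter (fun w => s(z, w) ∈ O ∆ {s(x, y)})) ⊆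
      (Finset.univ.filter (fun w => s(z, w) ∈ O)) ∪
        ((if z = x then {y} else ∅) ∪ (if z = y then {x} else ∅)) := by
    intro w hw
    simp only [Finset.mem_filter, Finset.mem_univ, true_and, Finset.mem_symmDiff,
      Finset.mem_singleton, Finset.mem_union] at hw ⊢
    rcases hw with h | h
    · exact Or.inl h.1
    · right
      rcases Sym2.eq_iff.1 h.1 with ⟨rfl, rfl⟩ | ⟨rfl, rfl⟩
      · left; simp
      · right; simp
  refine (Finset.card_le_card this).trans ((Finset.card_union_le _ _).trans ?_)
  have := Finset.card_union_le (if z = x then ({y} : Finset (Fin n)) else ∅) (if z = y then {x} else ∅)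
  split_ifs at this ⊢ <;> simp_all

lemma cloD_of_clo {n : ℕ} (D : Fin n → ℕ) (v : Fin n) (l : List (Fin n)) :
    ∀ (x : Fin n) (O : Finset (Sym2 (Fin n))), Clo v x O l →
      (∀ z, odeg O z + 2 * l.count z + (if z = x then 1 else 0) ≤ D z) → CloD D v x O l := by
  induction l with
  | nil => intro x O h _; exact h
  | cons y l ih =>
    intro x O h hD
    refine ⟨?_, ih _ _ h ?_⟩
    · have := hD x; omega
    · intro z
      have h1 := hD z
      have h2 := odeg_step O x y z
      rw [List.count_cons] at h1
      by_cases hzy : z = y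
      · subst hzy
        simp at h1 h2 ⊢
        omega
      · have : ¬ (y = z) := fun h => hzy h.symm
        simp [hzy, this] at h1 h2 ⊢
        omega

lemma card_le_sum_preimage {n : ℕ} (A : Finset (List (Fin n))) (ℓ : ℕ)
    (hA : ∀ l ∈ A, l.length = ℓ + 1) :
    A.card ≤ ∑ y : Fin n, (A.preimage (List.cons y) (List.cons_injective.injOn)).card := by
  classical
  have : A ⊆ Finset.univ.biUnion
      (fun y : Fin n => (A.preimage (List.cons y) (List.cons_injective.injOn)).image (List.cons y)) := by
    intro l hl
    have := hA l hl
    match l, this with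
    | y :: l, _ =>
      simp only [Finset.mem_biUnion, Finset.mem_univ, true_and, Finset.mem_image, Finset.mem_preimage]
      exact ⟨y, l, hl, rfl⟩
  refine (Finset.card_le_card this).trans (Finset.card_biUnion_le.trans ?_)
  exact Finset.sum_le_sum fun y _ => Finset.card_image_le

/-- potential -/
noncomputable def pot {n : ℕ} (r : Fin n → ℝ) (s : ℝ) (O : Finset (Sym2 (Fin n))) : ℝ :=
  ∏ e ∈ O, ((e.map r).mul / s)

open scoped symmDiff in
lemma core_count {n : ℕ} (D : Fin n → ℕ) (v : Fin n) (r : Fin n → ℝ) (s : ℝ) (hs : 0 < s)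
    (hr : ∀ x, 0 < r x) (hrD : ∀ x, r x ^ 2 = D x) (hsum : ∑ x, r x ^ 2 ≤ s ^ 2) (ℓ : ℕ) :
    ∀ (x : Fin n) (O : Finset (Sym2 (Fin n))) (A : Finset (List (Fin n))),
      (∀ l ∈ A, l.length = ℓ ∧ CloD D v x O l) →
      (A.card : ℝ) ≤ 2 ^ ℓ * s ^ ℓ * pot r s O * (r x / r v) := by
  classical
  have hpot : ∀ O, 0 < pot r s O := by
    intro O
    refine Finset.prod_pos ?_
    intro e _
    induction e with | _ a b => exact div_pos (mul_pos (hr a) (hr b)) hs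
  induction ℓ with
  | zero =>
    intro x O A hA
    rcases A.eq_empty_or_nonempty with rfl | ⟨l, hl⟩
    · simp only [Finset.card_empty, Nat.cast_zero]
      have := hpot O; have := hr x; have := hr v; positivity
    · have h1 := hA l hl
      have hl0 : l = [] := List.length_eq_zero_iff.1 h1.1
      subst hl0
      obtain ⟨rfl, rfl⟩ := h1.2
      have : A ⊆ {[]} := by
        intro l hl
        simpa using List.length_eq_zero_iff.1 (hA l hl).1
      have h2 := Finset.card_le_card this
      simp only [Finset.card_singleton] at h2
      have : (A.card : ℝ) ≤ 1 := by exact_mod_cast h2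
      simpa [pot, (hr x).ne'] using this
  | succ ℓ ih =>
    intro x O A hA
    rcases A.eq_empty_or_nonempty with rfl | ⟨l, hl⟩
    · simp only [Finset.card_empty, Nat.cast_zero]
      have := hpot O; have := hr x; have := hr v; positivity
    have hdeg : odeg O x ≤ D x := by
      obtain ⟨h1, h2⟩ := hA l hl
      match l, h1, h2 with
      | y :: l, _, h2 => exact h2.1
    have h1 : (A.card : ℝ) ≤ ∑ y : Fin n, 2 ^ ℓ * s ^ ℓ * pot r s (O ∆ {s(x, y)}) * (r y / r v) := by
      refine le_trans (by exact_mod_cast card_le_sum_preimage A ℓ (fun l hl => (hA l hl).1))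
        (le_trans (le_of_eq (Nat.cast_sum _ _)) (Finset.sum_le_sum fun y _ => ih y _ _ ?_))
      intro l hl
      have := hA _ (Finset.mem_preimage.1 hl)
      exact ⟨by simpa using this.1, this.2.2⟩
    refine h1.trans ?_
    have hstep : ∀ y : Fin n, pot r s (O ∆ {s(x, y)}) ≤
        pot r s O * (r x * r y / s) +
        (if s(x, y) ∈ O then pot r s O * (s / (r x * r y)) else 0) := by
      intro y
      have hx := hr x; have hy := hr y
      by_cases h : s(x, y) ∈ O
      · have e1 : O ∆ {s(x, y)} = O.erase s(x, y) := by
          ext e; simp only [Finset.mem_symmDiff, Finset.mem_singleton, Finset.mem_erase]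
          grind
        have e2 : pot r s O = (r x * r y / s) * pot r s (O.erase s(x, y)) := by
          unfold pot; rw [← Finset.mul_prod_erase O _ h]; rfl
        rw [if_pos h, e1]
        have : pot r s O * (s / (r x * r y)) = pot r s (O.erase s(x, y)) := by
          rw [e2]; field_simp
        rw [this]
        have := hpot O
        have : 0 < pot r s O * (r x * r y / s) := by positivity
        linarith
      · have e1 : O ∆ {s(x, y)} = insert s(x, y) O := by
          ext e; simp only [Finset.mem_symmDiff, Finset.mem_singleton, Finset.mem_insert]
          grind
        rw [if_neg h, e1]
        unfold pot
        rw [Finset.prod_insert h, mul_comm]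
        simp [Sym2.map_mk, Sym2.mul]
    have hx := hr x; have hv := hr v; have hO := hpot O
    calc ∑ y : Fin n, 2 ^ ℓ * s ^ ℓ * pot r s (O ∆ {s(x, y)}) * (r y / r v)
        ≤ ∑ y : Fin n, 2 ^ ℓ * s ^ ℓ * (pot r s O * (r x * r y / s) +
        (if s(x, y) ∈ O then pot r s O * (s / (r x * r y)) else 0)) * (r y / r v) := by
          refine Finset.sum_le_sum fun y _ => ?_
          have hy := hr y
          gcongr
          exact hstep y
      _ = ∑ y : Fin n, ((2 ^ ℓ * s ^ ℓ * pot r s O * r x / (s * r v)) * r y ^ 2 +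
          (if s(x, y) ∈ O then 2 ^ ℓ * s ^ ℓ * pot r s O * s / (r x * r v) else 0)) := by
          refine Finset.sum_congr rfl fun y _ => ?_
          have hy := hr y
          split_ifs
          · field_simp
          · field_simp; ring
      _ = (2 ^ ℓ * s ^ ℓ * pot r s O * r x / (s * r v)) * ∑ y, r y ^ 2 +
          (odeg O x : ℝ) * (2 ^ ℓ * s ^ ℓ * pot r s O * s / (r x * r v)) := by
          rw [Finset.sum_add_distrib, ← Finset.mul_sum, ← Finset.sum_filter, Finset.sum_const,
            nsmul_eq_mul]
          rfl
      _ ≤ (2 ^ ℓ * s ^ ℓ * pot r s O * r x / (s * r v)) * s ^ 2 +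
          (r x ^ 2) * (2 ^ ℓ * s ^ ℓ * pot r s O * s / (r x * r v)) := by
          have : (odeg O x : ℝ) ≤ r x ^ 2 := by rw [hrD]; exact_mod_cast hdeg
          gcongr
      _ = 2 ^ (ℓ + 1) * s ^ (ℓ + 1) * pot r s O * (r x / r v) := by
          field_simp; ring

lemma count_profile {n : ℕ} (v : Fin n) (ℓ : ℕ) (P : Multiset (Fin n))
    (A : Finset (List (Fin n))) (hA : ∀ l ∈ A, l.length = ℓ ∧ Clo v v ∅ l ∧ (l : Multiset (Fin n)) = P) :
    (A.card : ℝ) ≤ 2 ^ ℓ * (√(2 * ℓ + n)) ^ ℓ := by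
  classical
  rcases A.eq_empty_or_nonempty with rfl | ⟨l₀, hl₀⟩
  · simp only [Finset.card_empty, Nat.cast_zero]; positivity
  have hn : 0 < n := v.pos
  have hPc : P.card = ℓ := by
    have := hA l₀ hl₀
    rw [← this.2.2]; simpa using this.1
  let D : Fin n → ℕ := fun x => 2 * P.count x + 1
  have := core_count D v (fun x => √(D x)) (√(2 * ℓ + n)) (by positivity)
    (fun x => by simp only [D]; positivity) (fun x => Real.sq_sqrt (by positivity)) ?_ ℓ v ∅ A ?_
  · have hv : √(D v : ℝ) ≠ 0 := by simp only [D]; positivity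
    simpa [pot, div_self hv] using this
  · rw [Real.sq_sqrt (by positivity)]
    have e : ∀ x, (√(D x : ℝ)) ^ 2 = ((D x : ℕ) : ℝ) := fun x => Real.sq_sqrt (by positivity)
    simp only [e]
    rw [← Nat.cast_sum]
    have : ∑ x, D x = 2 * ℓ + n := by
      simp only [D, Finset.sum_add_distrib, ← Finset.mul_sum]
      have : ∑ x : Fin n, P.count x = P.card :=
        Multiset.sum_count_eq_card (fun a _ => Finset.mem_univ a)
      rw [this, hPc]; simp
    rw [this]; push_cast; exact le_rfl
  · intro l hl
    obtain ⟨h1, h2, h3⟩ := hA l hl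
    refine ⟨h1, cloD_of_clo D v l v ∅ h2 ?_⟩
    intro z
    have : P.count z = l.count z := by rw [← h3, Multiset.coe_count]
    simp only [D, this]
    have : odeg (∅ : Finset (Sym2 (Fin n))) z = 0 := by simp [odeg]
    rw [this]
    split_ifs <;> omega

lemma count_walks_aux {n : ℕ} (v : Fin n) (ℓ : ℕ)
    (A : Finset (List (Fin n))) (hA : ∀ l ∈ A, l.length = ℓ ∧ Clo v v ∅ l) :
    (A.card : ℝ) ≤ 2 ^ (n + ℓ) * (2 ^ ℓ * (√(2 * ℓ + n)) ^ ℓ) := by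
  classical
  have h1 := Finset.card_eq_sum_card_image (fun l : List (Fin n) => (l : Multiset (Fin n))) A
  have h2 : (A.image (fun l : List (Fin n) => (l : Multiset (Fin n)))).card ≤ 2 ^ (n + ℓ) := by
    have : (A.image (fun l : List (Fin n) => (l : Multiset (Fin n)))) ⊆
        (Finset.univ : Finset (Sym (Fin n) ℓ)).image (fun s : Sym (Fin n) ℓ => s.val) := by
      intro P hP
      obtain ⟨l, hl, rfl⟩ := Finset.mem_image.1 hP
      refine Finset.mem_image.2 ⟨⟨(l : Multiset (Fin n)), by simpa using (hA l hl).1⟩, Finset.mem_univ _, rfl⟩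
    refine (Finset.card_le_card this).trans (Finset.card_image_le.trans ?_)
    rw [Finset.card_univ, Sym.card_sym_eq_choose, Fintype.card_fin]
    exact (Nat.choose_le_two_pow _ _).trans (Nat.pow_le_pow_right (by norm_num) (by omega))
  rw [h1, Nat.cast_sum]
  refine (Finset.sum_le_card_nsmul _ _ (2 ^ ℓ * (√(2 * ℓ + n)) ^ ℓ) ?_).trans ?_
  · intro P _
    refine count_profile v ℓ P _ ?_
    intro l hl
    obtain ⟨hl, h⟩ := Finset.mem_filter.1 hl
    exact ⟨(hA l hl).1, (hA l hl).2, h⟩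
  · rw [nsmul_eq_mul]
    gcongr
    exact_mod_cast h2

lemma clo_append {n : ℕ} (v : Fin n) (l₂ : List (Fin n)) (h2 : Clo v v ∅ l₂) (l₁ : List (Fin n)) :
    ∀ x O, Clo v x O l₁ → Clo v x O (l₁ ++ l₂) := by
  induction l₁ with
  | nil => rintro x O ⟨rfl, rfl⟩; exact h2
  | cons y l ih => intro x O h; exact ih _ _ h

lemma pow_walks {n : ℕ} (v : Fin n) (ℓ : ℕ)
    (A : Finset (List (Fin n))) (hA : ∀ l ∈ A, l.length = ℓ ∧ Clo v v ∅ l) (q : ℕ) :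
    ∃ B : Finset (List (Fin n)), B.card = A.card ^ q ∧ ∀ l ∈ B, l.length = q * ℓ ∧ Clo v v ∅ l := by
  classical
  induction q with
  | zero => exact ⟨{[]}, by simp, by simp [Clo]⟩
  | succ q ih =>
    obtain ⟨B, hB, hB'⟩ := ih
    refine ⟨Finset.image₂ (· ++ ·) A B, ?_, ?_⟩
    · rw [Finset.card_image₂_iff.2, hB, pow_succ, mul_comm]
      rintro ⟨a, b⟩ ⟨ha, hb⟩ ⟨a', b'⟩ ⟨ha', hb'⟩ h
      have := List.append_inj h ((hA a ha).1.trans (hA a' ha').1.symm)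
      exact Prod.ext this.1 this.2
    · intro l hl
      obtain ⟨a, ha, b, hb, rfl⟩ := Finset.mem_image₂.1 hl
      refine ⟨?_, clo_append v b (hB' b hb).2 a _ _ (hA a ha).2⟩
      simp [(hA a ha).1, (hB' b hb).1]; ring

lemma count_walks {n : ℕ} (v : Fin n) (ℓ : ℕ) (hℓ : 0 < ℓ)
    (A : Finset (List (Fin n))) (hA : ∀ l ∈ A, l.length = ℓ ∧ Clo v v ∅ l) :
    (A.card : ℝ) ≤ 16 ^ ℓ * (√(n + ℓ)) ^ ℓ := by
  have hn : 0 < n := v.pos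
  set q := n / ℓ + 1 with hq
  have hdm := Nat.div_add_mod n ℓ
  have hml := Nat.mod_lt n hℓ
  have h1 : n ≤ q * ℓ := by rw [hq]; nlinarith
  have h2 : q * ℓ ≤ n + ℓ := by rw [hq]; nlinarith [Nat.div_mul_le_self n ℓ]
  obtain ⟨B, hB, hB'⟩ := pow_walks v ℓ A hA q
  have h3 := count_walks_aux v (q * ℓ) B hB'
  rw [hB, Nat.cast_pow] at h3
  refine le_of_pow_le_pow_left₀ (n := q) (Nat.succ_ne_zero _) (by positivity) (h3.trans ?_)
  have h4 : √(2 * ((q * ℓ : ℕ) : ℝ) + n) ≤ 2 * √(n + ℓ) := by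
    rw [show (2 : ℝ) * √(n + ℓ) = √(4 * (n + ℓ)) by
      rw [Real.sqrt_mul (by norm_num), show (4 : ℝ) = 2 ^ 2 by norm_num, Real.sqrt_sq (by norm_num)]]
    refine Real.sqrt_le_sqrt ?_
    have h1' : (n : ℝ) ≤ ((q * ℓ : ℕ) : ℝ) := by exact_mod_cast h1
    have h2' : ((q * ℓ : ℕ) : ℝ) ≤ n + ℓ := by exact_mod_cast h2
    linarith
  calc (2 : ℝ) ^ (n + q * ℓ) * (2 ^ (q * ℓ) * √(2 * ((q * ℓ : ℕ) : ℝ) + n) ^ (q * ℓ))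
      ≤ 2 ^ (q * ℓ + q * ℓ) * (2 ^ (q * ℓ) * (2 * √(n + ℓ)) ^ (q * ℓ)) := by
        gcongr
        · norm_num
    _ = (16 ^ ℓ * √(n + ℓ) ^ ℓ) ^ q := by
        have e : ((16 : ℝ) ^ ℓ * √(n + ℓ) ^ ℓ) ^ q = (16 * √(n + ℓ)) ^ (q * ℓ) := by
          rw [← mul_pow, ← pow_mul, mul_comm ℓ q]
        rw [e, pow_add, ← mul_pow, ← mul_pow, ← mul_pow]
        congr 1
        ring


/-! ### Part 2: trees of triangles -/

/-- boundary edges of a tree of triangles hung on the edge `u v`. -/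
def tE {n : ℕ} : Fin n → BinaryTree (Fin n) → Fin n → Multiset (Sym2 (Fin n))
  | u, .nil, v => {s(u, v)}
  | u, .node w L R, v => tE u L w + tE w R v

/-- triangles of the tree. -/
def tT {n : ℕ} : Fin n → BinaryTree (Fin n) → Fin n → Multiset (Finset (Fin n))
  | _, .nil, _ => 0
  | u, .node w L R, v => {u, w, v} ::ₘ (tT u L w + tT w R v)

/-- inorder traversal -/
def inord {α : Type} : BinaryTree α → List α
  | .nil => []
  | .node w L R => inord L ++ w :: inord R

/-- edges of a walk -/
def wE {n : ℕ} : Fin n → List (Fin n) → Multiset (Sym2 (Fin n))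
  | _, [] => 0
  | x, y :: l => s(x, y) ::ₘ wE y l

lemma inord_length {α : Type} (T : BinaryTree α) : (inord T).length = T.numNodes := by
  induction T with
  | nil => rfl
  | node w L R h1 h2 => simp [inord, h1, h2]; omega

lemma card_tT {n : ℕ} (T : BinaryTree (Fin n)) : ∀ u v, (tT u T v).card = T.numNodes := by
  induction T with
  | nil => intro u v; rfl
  | node w L R h1 h2 => intro u v; simp [tT, h1, h2]

lemma numNodes_map' {α β : Type} (f : α → β) (T : BinaryTree α) : (T.map f).numNodes = T.numNodes := by
  induction T with
  | nil => rfl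
  | node w L R h1 h2 => simp [BinaryTree.map, h1, h2]

lemma tree_inj {α : Type} (T : BinaryTree α) : ∀ T' : BinaryTree α,
    T.map (fun _ => ()) = T'.map (fun _ => ()) → inord T = inord T' → T = T' := by
  induction T with
  | nil =>
    intro T' h _
    cases T' with
    | nil => rfl
    | node w L R => simp [BinaryTree.map] at h
  | node w L R h1 h2 =>
    intro T' h h'
    cases T' with
    | nil => simp [BinaryTree.map] at h
    | node w' L' R' =>
      simp only [BinaryTree.map, BinaryTree.node.injEq, true_and] at h
      have hl : (inord L).length = (inord L').length := by
        rw [inord_length, inord_length, ← numNodes_map' (fun _ => ()) L, h.1, numNodes_map']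
      have := List.append_inj h' hl
      have h3 := List.cons_eq_cons.1 this.2
      rw [h1 L' h.1 this.1, h2 R' h.2 h3.2, h3.1]

lemma wE_inord {n : ℕ} (T : BinaryTree (Fin n)) : ∀ u v l,
    wE u (inord T ++ v :: l) = tE u T v + wE v l := by
  induction T with
  | nil => intro u v l; simp [inord, wE, tE]
  | node w L R h1 h2 =>
    intro u v l
    simp only [inord, List.append_assoc, List.cons_append, tE]
    rw [h1, h2, add_assoc]

open scoped symmDiff in
lemma clo_of_even {n : ℕ} (v : Fin n) (l : List (Fin n)) : ∀ x O,
    (∀ e, Odd ((wE x (l ++ [v])).count e) ↔ e ∈ O) → Clo v x O (l ++ [v]) := by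
  have key : ∀ (l : List (Fin n)) (x : Fin n) (O : Finset (Sym2 (Fin n))) (y : Fin n),
      (∀ e, Odd ((wE x (y :: l)).count e) ↔ e ∈ O) →
      (∀ e, Odd ((wE y l).count e) ↔ e ∈ O ∆ {s(x, y)}) := by
    intro l x O y h e
    have := h e
    simp only [wE, Multiset.count_cons] at this
    rw [Finset.mem_symmDiff, Finset.mem_singleton, ← this]
    by_cases he : e = s(x, y)
    · simp [he, Nat.odd_add_one]
    · simp [he]
  induction l with
  | nil =>
    intro x O h
    refine ⟨rfl, ?_⟩
    ext e
    have := key [] x O v h e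
    rw [← this]; simp [wE]
  | cons y l ih =>
    intro x O h
    exact ih y _ (key _ _ _ _ h)

lemma tree_insert {n : ℕ} (w : Fin n) (ε : Sym2 (Fin n)) (T : BinaryTree (Fin n)) : ∀ u v,
    ε ∈ tE u T v → ∃ p q T', ε = s(p, q) ∧ tT u T' v = {p, w, q} ::ₘ tT u T v ∧
      s(p, q) ::ₘ tE u T' v = s(p, w) ::ₘ s(w, q) ::ₘ tE u T v := by
  induction T with
  | nil =>
    intro u v h
    refine ⟨u, v, .node w .nil .nil, by simpa [tE] using h, by simp [tT], ?_⟩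
    simp only [tE, ← Multiset.singleton_add]
    abel
  | node z L R h1 h2 =>
    intro u v h
    simp only [tE, Multiset.mem_add] at h
    rcases h with h | h
    · obtain ⟨p, q, T', e, e1, e2⟩ := h1 _ _ h
      refine ⟨p, q, .node z T' R, e, ?_, ?_⟩
      · simp only [tT, e1, ← Multiset.singleton_add]; abel
      · simp only [tE]
        rw [← Multiset.cons_add, e2, Multiset.cons_add, Multiset.cons_add]
    · obtain ⟨p, q, T', e, e1, e2⟩ := h2 _ _ h
      refine ⟨p, q, .node z L T', e, ?_, ?_⟩
      · simp only [tT, e1, ← Multiset.singleton_add]; abel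
      · simp only [tE]
        rw [← Multiset.add_cons, e2, Multiset.add_cons, Multiset.add_cons]

/-- parity filling -/
def PF {n : ℕ} (τ : Finset (Fin n)) (y : Finset (Finset (Fin n))) : Prop :=
  (∀ t ∈ y, t.card = 3) ∧
  ∀ e : Finset (Fin n), e.card = 2 →
    (Odd ((y.filter (fun t => e ⊆ t)).card) ↔ e ⊆ τ)

/-- minimal parity filling -/
def MPF {n : ℕ} (τ : Finset (Fin n)) (y : Finset (Finset (Fin n))) : Prop :=
  PF τ y ∧ ∀ y' ⊆ y, PF τ y' → y' = y

/-- the state of the exploration -/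
def St {n : ℕ} (a b c : Fin n) (y' : Finset (Finset (Fin n))) (L₁ L₂ L₃ : BinaryTree (Fin n)) : Prop :=
  tT a L₁ b + tT b L₂ c + tT c L₃ a = y'.val ∧
  (∀ x, s(x, x) ∉ tE a L₁ b + tE b L₂ c + tE c L₃ a) ∧
  (∀ x z, x ≠ z → ((tE a L₁ b + tE b L₂ c + tE c L₃ a).count s(x, z) : ZMod 2) =
    (if {x, z} ⊆ ({a, b, c} : Finset (Fin n)) then 1 else 0) +
      ((y'.filter (fun t => {x, z} ⊆ t)).card : ZMod 2))

lemma triangle_count {n : ℕ} {p q w x z : Fin n} (hpq : p ≠ q) (hpw : p ≠ w) (hwq : w ≠ q)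
    (hxz : x ≠ z) : ((if s(x, z) = s(p, q) then 1 else 0) + (if s(x, z) = s(p, w) then 1 else 0)
      + (if s(x, z) = s(w, q) then 1 else 0) : ZMod 2) =
      if {x, z} ⊆ ({p, w, q} : Finset (Fin n)) then 1 else 0 := by
  simp only [Sym2.eq_iff, Finset.insert_subset_iff, Finset.mem_insert, Finset.mem_singleton,
    Finset.singleton_subset_iff]
  by_cases h1 : x = p <;> by_cases h2 : x = w <;> by_cases h3 : x = q <;>
  by_cases h4 : z = p <;> by_cases h5 : z = w <;> by_cases h6 : z = q <;> simp_all

lemma st_init {n : ℕ} (a b c : Fin n) (hab : a ≠ b) (hac : a ≠ c) (hbc : b ≠ c) :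
    St a b c ∅ .nil .nil .nil := by
  refine ⟨by simp [tT], ?_, ?_⟩
  · intro x
    simp only [tE, Multiset.mem_add, Multiset.mem_singleton, Sym2.eq_iff]
    grind
  · intro x z hxz
    have h := triangle_count (p := a) (w := b) (q := c) hac hab hbc hxz
    simp only [tE, Multiset.count_add, Multiset.count_singleton, Finset.filter_empty, Finset.card_empty]
    rw [← h, Sym2.eq_swap (a := c) (b := a)]
    push_cast
    ring

lemma zmod_aux : ∀ (E E' i j k : ZMod 2), E' + i = E + k + j → E' = E + (i + j + k) := by
  decide

lemma zmod_aux2 (P : Prop) [Decidable P] (k : ℕ) :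
    (0 : ZMod 2) = (if P then 1 else 0) + (k : ZMod 2) ↔ (Odd k ↔ P) := by
  rw [← ZMod.natCast_ne_zero_iff_odd]
  generalize (k : ZMod 2) = u
  by_cases h : P
  · simp only [h, if_true, iff_true]; revert u; decide
  · simp only [h, if_false, iff_false]; revert u; decide

lemma st_step {n : ℕ} {a b c : Fin n} {y' : Finset (Finset (Fin n))} {L₁ L₂ L₃ : BinaryTree (Fin n)}
    (h : St a b c y' L₁ L₂ L₃) (x z : Fin n) (hε : s(x, z) ∈ tE a L₁ b + tE b L₂ c + tE c L₃ a)
    (t : Finset (Fin n)) (ht : t.card = 3) (hty : t ∉ y') (hxt : {x, z} ⊆ t) :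
    ∃ L₁' L₂' L₃', St a b c (insert t y') L₁' L₂' L₃' := by
  have hxz : x ≠ z := by
    rintro rfl; exact h.2.1 _ hε
  obtain ⟨w, hw, rfl⟩ : ∃ w, w ∉ ({x, z} : Finset (Fin n)) ∧ t = {x, w, z} := by
    have h2 : ({x, z} : Finset (Fin n)).card = 2 := Finset.card_pair hxz
    have h3 : (t \ {x, z}).card = 1 := by rw [Finset.card_sdiff_of_subset hxt]; omega
    obtain ⟨w, hw⟩ := Finset.card_eq_one.1 h3
    refine ⟨w, ?_, ?_⟩
    · have : w ∈ t \ {x, z} := by rw [hw]; simp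
      exact (Finset.mem_sdiff.1 this).2
    · rw [← Finset.sdiff_union_of_subset hxt, hw]
      ext; simp only [Finset.mem_union, Finset.mem_insert, Finset.mem_singleton]; tauto
  simp only [Finset.mem_insert, Finset.mem_singleton, not_or] at hw
  have main : ∀ L₁' L₂' L₃' p q, s(x, z) = s(p, q) →
      tT a L₁' b + tT b L₂' c + tT c L₃' a =
        {p, w, q} ::ₘ (tT a L₁ b + tT b L₂ c + tT c L₃ a) →
      s(p, q) ::ₘ (tE a L₁' b + tE b L₂' c + tE c L₃' a) =
        s(p, w) ::ₘ s(w, q) ::ₘ (tE a L₁ b + tE b L₂ c + tE c L₃ a) →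
      St a b c (insert {x, w, z} y') L₁' L₂' L₃' := by
    intro L₁' L₂' L₃' p q e e1 e2
    have hset : ({p, w, q} : Finset (Fin n)) = {x, w, z} := by
      rcases Sym2.eq_iff.1 e with ⟨rfl, rfl⟩ | ⟨rfl, rfl⟩
      · rfl
      · ext; simp only [Finset.mem_insert, Finset.mem_singleton]; tauto
    have hpq : p ≠ q ∧ p ≠ w ∧ w ≠ q := by
      rcases Sym2.eq_iff.1 e with ⟨rfl, rfl⟩ | ⟨rfl, rfl⟩
      · exact ⟨hxz, fun h => hw.1 h.symm, hw.2⟩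
      · exact ⟨hxz.symm, fun h => hw.2 h.symm, hw.1⟩
    obtain ⟨hpq, hpw, hwq⟩ := hpq
    refine ⟨?_, ?_, ?_⟩
    · rw [e1, hset, h.1, Finset.insert_val_of_notMem hty]
    · intro v hv
      have : s(v, v) ∈ s(p, w) ::ₘ s(w, q) ::ₘ (tE a L₁ b + tE b L₂ c + tE c L₃ a) := by
        rw [← e2]; exact Multiset.mem_cons_of_mem hv
      rw [Multiset.mem_cons, Multiset.mem_cons] at this
      rcases this with h' | h' | h'
      · have := Sym2.eq_iff.1 h'
        exact hpw (by grind)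
      · have := Sym2.eq_iff.1 h'
        exact hwq (by grind)
      · exact h.2.1 _ h'
    · intro u v huv
      have e3 := congrArg (fun M => ((Multiset.count s(u, v) M : ℕ) : ZMod 2)) e2
      simp only [Multiset.count_cons, Nat.cast_add, Nat.cast_ite, Nat.cast_one, Nat.cast_zero] at e3
      have e4 := triangle_count hpq hpw hwq huv
      have e5 := h.2.2 u v huv
      rw [hset] at e4
      have e6 : (((insert {x, w, z} y').filter (fun t => {u, v} ⊆ t)).card : ZMod 2) =
          ((y'.filter (fun t => {u, v} ⊆ t)).card : ZMod 2) +
            (if {u, v} ⊆ ({x, w, z} : Finset (Fin n)) then 1 else 0) := by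
        rw [Finset.filter_insert]
        split_ifs with h1
        · rw [Finset.card_insert_of_notMem (by simp [hty])]; push_cast; rfl
        · simp
      rw [e6, ← add_assoc, ← e5, ← e4]
      exact zmod_aux _ _ _ _ _ e3
  rcases Multiset.mem_add.1 hε with hε | hε
  · rcases Multiset.mem_add.1 hε with hε | hε
    · obtain ⟨p, q, T', e, e1, e2⟩ := tree_insert w _ _ _ _ hε
      refine ⟨T', L₂, L₃, main _ _ _ p q e ?_ ?_⟩
      · rw [e1, Multiset.cons_add, Multiset.cons_add]
      · rw [← Multiset.cons_add, ← Multiset.cons_add, e2]; simp only [Multiset.cons_add]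
    · obtain ⟨p, q, T', e, e1, e2⟩ := tree_insert w _ _ _ _ hε
      refine ⟨L₁, T', L₃, main _ _ _ p q e ?_ ?_⟩
      · rw [e1, Multiset.add_cons, Multiset.cons_add]
      · rw [← Multiset.cons_add, ← Multiset.add_cons, e2]
        simp only [Multiset.cons_add, Multiset.add_cons]
  · obtain ⟨p, q, T', e, e1, e2⟩ := tree_insert w _ _ _ _ hε
    refine ⟨L₁, L₂, T', main _ _ _ p q e ?_ ?_⟩
    · rw [e1, Multiset.add_cons]
    · rw [← Multiset.add_cons, e2]; simp only [Multiset.add_cons]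

lemma explore {n : ℕ} {a b c : Fin n} (hab : a ≠ b) (hac : a ≠ c) (hbc : b ≠ c)
    {y : Finset (Finset (Fin n))} (hy : MPF {a, b, c} y) (k : ℕ) (hk : k ≤ y.card) :
    ∃ y' ⊆ y, y'.card = k ∧ ∃ L₁ L₂ L₃, St a b c y' L₁ L₂ L₃ := by
  induction k with
  | zero => exact ⟨∅, by simp, rfl, _, _, _, st_init a b c hab hac hbc⟩
  | succ k ih =>
    obtain ⟨y', hsub, hcard, L₁, L₂, L₃, hst⟩ := ih (by omega)
    by_cases hex : ∃ x z, s(x, z) ∈ tE a L₁ b + tE b L₂ c + tE c L₃ a ∧ ∃ t ∈ y, t ∉ y' ∧ {x, z} ⊆ t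
    · obtain ⟨x, z, hε, t, hty, hty', hxt⟩ := hex
      refine ⟨insert t y', Finset.insert_subset hty hsub, ?_,
        st_step hst x z hε t (hy.1.1 t hty) hty' hxt⟩
      rw [Finset.card_insert_of_notMem hty', hcard]
    · exfalso
      push Not at hex
      have : PF {a, b, c} y' := by
        refine ⟨fun t ht => hy.1.1 t (hsub ht), ?_⟩
        intro e he
        obtain ⟨x, z, hxz, rfl⟩ := Finset.card_eq_two.1 he
        by_cases hε : s(x, z) ∈ tE a L₁ b + tE b L₂ c + tE c L₃ a
        · rw [← hy.1.2 _ he]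
          have : y'.filter (fun t => {x, z} ⊆ t) = y.filter (fun t => {x, z} ⊆ t) := by
            ext t
            simp only [Finset.mem_filter]
            constructor
            · exact fun h => ⟨hsub h.1, h.2⟩
            · intro h
              by_contra h'
              exact hex x z hε t h.1 (fun h'' => h' ⟨h'', h.2⟩) h.2
          rw [this]
        · have h1 := hst.2.2 x z hxz
          rw [Multiset.count_eq_zero_of_notMem hε] at h1
          rw [Nat.cast_zero] at h1
          exact (zmod_aux2 _ _).1 h1
      have := hy.2 y' hsub this
      rw [this] at hcard
      omega

lemma exists_tree {n : ℕ} {τ : Finset (Fin n)} (hτ : τ.card = 3)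
    {y : Finset (Finset (Fin n))} (hy : MPF τ y) :
    ∃ a b c L₁ L₂ L₃, τ = {a, b, c} ∧ tT a L₁ b + tT b L₂ c + tT c L₃ a = y.val ∧
      Clo a a ∅ (inord (BinaryTree.node b L₁ (.node c L₂ L₃)) ++ [a]) := by
  obtain ⟨a, b, c, hab, hac, hbc, rfl⟩ := Finset.card_eq_three.1 hτ
  obtain ⟨y', hsub, hcard, L₁, L₂, L₃, hst⟩ := explore hab hac hbc hy y.card le_rfl
  obtain rfl := Finset.eq_of_subset_of_card_le hsub hcard.ge
  refine ⟨a, b, c, L₁, L₂, L₃, rfl, hst.1, clo_of_even _ _ _ _ ?_⟩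
  intro e
  have h0 : wE a (inord (BinaryTree.node b L₁ (.node c L₂ L₃)) ++ [a]) =
      tE a L₁ b + tE b L₂ c + tE c L₃ a := by
    rw [wE_inord]; simp [tE, wE, add_assoc]
  rw [h0]
  simp only [Finset.notMem_empty, iff_false]
  induction e with | _ x z =>
  by_cases hxz : x = z
  · subst hxz
    rw [Multiset.count_eq_zero_of_notMem (hst.2.1 x)]; simp
  · rw [← ZMod.natCast_ne_zero_iff_odd, hst.2.2 x z hxz, not_not]
    exact ((zmod_aux2 _ _).2 (hy.1.2 {x, z} (Finset.card_pair hxz))).symm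


/-! ### Part 3: counting minimal fillings -/

/-- decoding -/
def decd {n : ℕ} : Fin n × BinaryTree (Fin n) → Finset (Fin n) × Finset (Finset (Fin n))
  | (a, .node b L₁ (.node c L₂ L₃)) =>
    ({a, b, c}, (tT a L₁ b + tT b L₂ c + tT c L₃ a).toFinset)
  | _ => (∅, ∅)

lemma exists_code {n : ℕ} {τ : Finset (Fin n)} (hτ : τ.card = 3)
    {y : Finset (Finset (Fin n))} (hy : MPF τ y) :
    ∃ g : Fin n × BinaryTree (Fin n), decd g = (τ, y) ∧ g.2.numNodes = y.card + 2 ∧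
      Clo g.1 g.1 ∅ (inord g.2 ++ [g.1]) := by
  obtain ⟨a, b, c, L₁, L₂, L₃, rfl, h1, h2⟩ := exists_tree hτ hy
  refine ⟨(a, .node b L₁ (.node c L₂ L₃)), ?_, ?_, h2⟩
  · simp only [decd, h1]
    rw [Finset.val_toFinset]
  · have := congrArg Multiset.card h1
    simp only [Multiset.card_add, card_tT] at this
    have h3 : y.card = y.val.card := rfl
    rw [h3, ← this]
    simp only [BinaryTree.numNodes]
    omega

lemma count_fillings {n : ℕ} (m : ℕ) (F : Finset (Finset (Fin n) × Finset (Finset (Fin n))))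
    (hF : ∀ f ∈ F, f.1.card = 3 ∧ MPF f.1 f.2 ∧ f.2.card = m) :
    (F.card : ℝ) ≤ (n * 4 ^ (m + 2)) * (16 ^ (m + 3) * (√(n + (m + 3 : ℕ))) ^ (m + 3)) := by
  classical
  have : ∀ f : Finset (Fin n) × Finset (Finset (Fin n)), f ∈ F →
      ∃ g : Fin n × BinaryTree (Fin n), decd g = f ∧ g.2.numNodes = m + 2 ∧
      Clo g.1 g.1 ∅ (inord g.2 ++ [g.1]) := by
    intro f hf
    obtain ⟨h1, h2, h3⟩ := hF f hf
    rw [← h3]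
    exact exists_code h1 h2
  rcases F.eq_empty_or_nonempty with hF0 | ⟨f₀, hf₀⟩
  · rw [hF0, Finset.card_empty, Nat.cast_zero]; positivity
  have hne : Nonempty (Fin n × BinaryTree (Fin n)) := ⟨(this f₀ hf₀).choose⟩
  choose! code hc1 hc2 hc3 using this
  set X := F.image code with hX
  have hXc : X.card = F.card := by
    refine Finset.card_image_of_injOn ?_
    intro f hf f' hf' h
    rw [← hc1 f hf, ← hc1 f' hf', h]
  have hXp : ∀ g ∈ X, g.2.numNodes = m + 2 ∧ Clo g.1 g.1 ∅ (inord g.2 ++ [g.1]) := by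
    intro g hg
    obtain ⟨f, hf, rfl⟩ := Finset.mem_image.1 hg
    exact ⟨hc2 f hf, hc3 f hf⟩
  let key : Fin n × BinaryTree (Fin n) → Fin n × BinaryTree Unit :=
    fun g => (g.1, g.2.map (fun _ => ()))
  have h1 := Finset.card_eq_sum_card_image key X
  have h2 : (X.image key).card ≤ n * 4 ^ (m + 2) := by
    have : X.image key ⊆ Finset.univ ×ˢ BinaryTree.treesOfNumNodesEq (m + 2) := by
      intro k hk
      obtain ⟨g, hg, rfl⟩ := Finset.mem_image.1 hk
      simp only [Finset.mem_product, Finset.mem_univ, true_and, BinaryTree.mem_treesOfNumNodesEq, key]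
      rw [numNodes_map']
      exact (hXp g hg).1
    refine (Finset.card_le_card this).trans ?_
    rw [Finset.card_product, Finset.card_univ, Fintype.card_fin,
      BinaryTree.treesOfNumNodesEq_card_eq_catalan, catalan_eq_centralBinom_div]
    exact Nat.mul_le_mul_left _ ((Nat.div_le_self _ _).trans (Nat.centralBinom_le_four_pow _))
  rw [← hXc, h1, Nat.cast_sum]
  refine (Finset.sum_le_card_nsmul _ _ (16 ^ (m + 3) * (√(n + (m + 3 : ℕ))) ^ (m + 3)) ?_).trans ?_
  · rintro ⟨a, S⟩ -
    set Z := X.filter (fun g => key g = (a, S)) with hZ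
    have hZp : ∀ g ∈ Z, g ∈ X ∧ g.1 = a ∧ g.2.map (fun _ => ()) = S := by
      intro g hg
      have := Finset.mem_filter.1 hg
      exact ⟨this.1, congrArg Prod.fst this.2, congrArg Prod.snd this.2⟩
    have hcz : (Z.image (fun g => inord g.2 ++ [g.1])).card = Z.card := by
      refine Finset.card_image_of_injOn ?_
      intro g hg g' hg' h
      obtain ⟨_, e1, e2⟩ := hZp g hg
      obtain ⟨_, e1', e2'⟩ := hZp g' hg'
      refine Prod.ext (e1.trans e1'.symm) (tree_inj _ _ (e2.trans e2'.symm) ?_)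
      exact (List.append_inj' h rfl).1
    rw [← hcz]
    refine count_walks a (m + 3) (by omega) _ ?_
    intro l hl
    obtain ⟨g, hg, rfl⟩ := Finset.mem_image.1 hl
    obtain ⟨hgX, e1, e2⟩ := hZp g hg
    have := hXp g hgX
    subst e1
    refine ⟨?_, this.2⟩
    simp [inord_length, this.1]
  · rw [nsmul_eq_mul]
    gcongr
    exact_mod_cast h2

/-! ### Part 4: probability -/

/-- weight -/
noncomputable def wt (n : ℕ) (p : ℝ≥0∞) (ω : Tri n → Bool) : ℝ≥0∞ :=
  ∏ t : Tri n, (if ω t then p else 1 - p)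

open Classical in
lemma lmProb_eq (n : ℕ) (p : ℝ≥0∞) (E : Set (Tri n → Bool)) :
    lmProb n p E = ∑ ω, if ω ∈ E then wt n p ω else 0 := by
  unfold lmProb
  have := tsum_subtype E (fun ω => wt n p ω)
  unfold wt at *
  rw [this, tsum_fintype]
  refine Finset.sum_congr rfl fun ω _ => ?_
  simp [Set.indicator_apply]

lemma sum_prod_bool {n : ℕ} (f : Tri n → Bool → ℝ≥0∞) :
    ∑ ω : Tri n → Bool, ∏ t, f t (ω t) = ∏ t, (f t true + f t false) := by
  classical
  have := Finset.prod_univ_sum (fun _ : Tri n => (Finset.univ : Finset Bool)) f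
  rw [Fintype.piFinset_univ] at this
  rw [← this]
  simp

lemma wt_total (n : ℕ) (p : ℝ≥0∞) (hp : p ≤ 1) : ∑ ω, wt n p ω = 1 := by
  unfold wt
  rw [sum_prod_bool (fun _ b => if b then p else 1 - p)]
  simp [add_tsub_cancel_of_le hp]

open Classical in
lemma prob_contains (n : ℕ) (p : ℝ≥0∞) (hp : p ≤ 1) (y : Finset (Finset (Fin n)))
    (hy : ∀ t ∈ y, t.card = 3) :
    ∑ ω, (if ∀ t ∈ y, ∃ h : t.card = 3, ω ⟨t, h⟩ = true then wt n p ω else 0) ≤ p ^ y.card := by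
  have h1 : ∀ ω, (if ∀ t ∈ y, ∃ h : t.card = 3, ω ⟨t, h⟩ = true then wt n p ω else 0) ≤
      ∏ t : Tri n, (if ω t then p else (if t.1 ∈ y then 0 else 1 - p)) := by
    intro ω
    split_ifs with h
    · refine le_of_eq (Finset.prod_congr rfl fun t _ => ?_)
      by_cases ht : t.1 ∈ y
      · obtain ⟨_, h'⟩ := h _ ht
        simp [h']
      · simp [ht]
    · exact zero_le
  refine (Finset.sum_le_sum fun ω _ => h1 ω).trans ?_
  rw [sum_prod_bool (fun t b => if b then p else (if t.1 ∈ y then 0 else 1 - p))]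
  have h2 : ∀ t : Tri n, ((if true = true then p else (if t.1 ∈ y then 0 else 1 - p)) +
      (if false = true then p else (if t.1 ∈ y then 0 else 1 - p))) = if t.1 ∈ y then p else 1 := by
    intro t
    by_cases ht : t.1 ∈ y <;> simp [ht, add_tsub_cancel_of_le hp]
  rw [Finset.prod_congr rfl fun t _ => h2 t]
  rw [Finset.prod_ite, Finset.prod_const, Finset.prod_const_one, mul_one]
  refine le_of_eq ?_
  congr 1
  refine Finset.card_bij (fun t _ => t.1) ?_ ?_ ?_
  · intro t ht; simpa using ht
  · intro a _ b _ h; exact Subtype.ext h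
  · intro t ht; exact ⟨⟨t, hy t ht⟩, by simpa using ht, rfl⟩

lemma fill_lt {n : ℕ} {ω : Tri n → Bool} {τ : Finset (Fin n)} {M : ℝ≥0∞}
    (h : ((fill n ω τ : ℕ∞) : ℝ≥0∞) < M) :
    ∃ y, MPF τ y ∧ (y.card : ℝ≥0∞) < M ∧ ∀ t ∈ y, ∃ h : t.card = 3, ω ⟨t, h⟩ = true := by
  classical
  let Z : Finset (Finset (Finset (Fin n))) := Finset.univ.filter (fun y => IsFilling n ω τ y)
  rcases Z.eq_empty_or_nonempty with hZ | hZ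
  · exfalso
    have : IsEmpty {y : Finset (Finset (Fin n)) // IsFilling n ω τ y} := by
      refine ⟨fun y => ?_⟩
      have : y.1 ∈ Z := by simp [Z, y.2]
      rw [hZ] at this; simp at this
    unfold fill at h
    rw [iInf_of_empty] at h
    simp at h
  · obtain ⟨y, hyZ, hmin⟩ := Finset.exists_min_image Z Finset.card hZ
    have hy : IsFilling n ω τ y := by simpa [Z] using hyZ
    have hle : (y.card : ℕ∞) ≤ fill n ω τ := by
      refine le_iInf fun z => ?_
      exact_mod_cast hmin z.1 (by simp [Z, z.2])
    refine ⟨y, ⟨⟨fun t ht => (hy.1 t ht).1, hy.2⟩, ?_⟩, lt_of_le_of_lt ?_ h, hy.1⟩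
    · intro y' hsub hPF
      have : IsFilling n ω τ y' := ⟨fun t ht => hy.1 t (hsub ht), hPF.2⟩
      exact Finset.eq_of_subset_of_card_le hsub (hmin y' (by simp [Z, this]))
    · have := ENat.toENNReal_le.2 hle
      simpa using this

open Classical in
/-- all small minimal fillings -/
noncomputable def GG (n : ℕ) (M : ℝ≥0∞) : Finset (Finset (Fin n) × Finset (Finset (Fin n))) :=
  Finset.univ.filter (fun g => g.1.card = 3 ∧ MPF g.1 g.2 ∧ (g.2.card : ℝ≥0∞) < M)

lemma markov (n : ℕ) (p M N : ℝ≥0∞) (hp : p ≤ 1) (hMN : 2 * N ^ 2 ≤ M ^ 2) :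
    (n.choose 3 : ℝ≥0∞) * lmProb n p {ω | (n.choose 3 : ℝ≥0∞) * N ^ 2 ≤
          ∑ τ ∈ (Finset.univ : Finset (Fin n)).powersetCard 3,
            ((fill n ω τ : ℕ∞) : ℝ≥0∞) ^ 2}ᶜ ≤ 2 * ∑ g ∈ GG n M, p ^ g.2.card := by
  classical
  have key : ∀ ω : Tri n → Bool, ω ∈ {ω | (n.choose 3 : ℝ≥0∞) * N ^ 2 ≤
          ∑ τ ∈ (Finset.univ : Finset (Fin n)).powersetCard 3,
            ((fill n ω τ : ℕ∞) : ℝ≥0∞) ^ 2}ᶜ → (n.choose 3 : ℝ≥0∞) ≤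
      2 * ∑ g ∈ GG n M, (if ∀ t ∈ g.2, ∃ h : t.card = 3, ω ⟨t, h⟩ = true then 1 else 0) := by
    intro ω hω
    set P := (Finset.univ : Finset (Fin n)).powersetCard 3 with hP
    have hPc : P.card = n.choose 3 := by simp [P]
    set A := P.filter (fun τ => ((fill n ω τ : ℕ∞) : ℝ≥0∞) < M) with hA
    set B := P.filter (fun τ => ¬ ((fill n ω τ : ℕ∞) : ℝ≥0∞) < M) with hB
    have hAB : A.card + B.card = n.choose 3 := by
      rw [← hPc]; exact Finset.card_filter_add_card_filter_not _
    have h1 : n.choose 3 ≤ 2 * A.card := by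
      by_contra hcon
      apply hω
      have h2 : n.choose 3 ≤ 2 * B.card := by omega
      calc (n.choose 3 : ℝ≥0∞) * N ^ 2 ≤ (2 * B.card) * N ^ 2 := by
            gcongr; exact_mod_cast h2
        _ = B.card * (2 * N ^ 2) := by ring
        _ ≤ B.card * M ^ 2 := by gcongr
        _ = ∑ τ ∈ B, M ^ 2 := by rw [Finset.sum_const, nsmul_eq_mul]
        _ ≤ ∑ τ ∈ B, ((fill n ω τ : ℕ∞) : ℝ≥0∞) ^ 2 := by
            refine Finset.sum_le_sum fun τ hτ => ?_
            have := not_lt.1 (Finset.mem_filter.1 hτ).2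
            gcongr
        _ ≤ _ := Finset.sum_le_sum_of_subset (Finset.filter_subset _ _)
    have h3 : A.card ≤ ((GG n M).filter
        (fun g => ∀ t ∈ g.2, ∃ h : t.card = 3, ω ⟨t, h⟩ = true)).card := by
      refine (Finset.card_le_card (t := ((GG n M).filter
        (fun g => ∀ t ∈ g.2, ∃ h : t.card = 3, ω ⟨t, h⟩ = true)).image Prod.fst) ?_).trans
        Finset.card_image_le
      intro τ hτ
      obtain ⟨hτP, hτM⟩ := Finset.mem_filter.1 hτ
      obtain ⟨y, hy1, hy2, hy3⟩ := fill_lt hτM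
      refine Finset.mem_image.2 ⟨(τ, y), ?_, rfl⟩
      simp only [GG, Finset.mem_filter, Finset.mem_univ, true_and]
      exact ⟨⟨(Finset.mem_powersetCard.1 hτP).2, hy1, hy2⟩, hy3⟩
    rw [← Finset.sum_filter, Finset.sum_const, nsmul_eq_mul, mul_one]
    exact_mod_cast h1.trans (Nat.mul_le_mul_left 2 h3)
  rw [lmProb_eq, Finset.mul_sum]
  calc _ ≤ ∑ ω, (2 * ∑ g ∈ GG n M,
        (if ∀ t ∈ g.2, ∃ h : t.card = 3, ω ⟨t, h⟩ = true then (1 : ℝ≥0∞) else 0)) * wt n p ω := by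
        refine Finset.sum_le_sum fun ω _ => ?_
        split_ifs with h
        · gcongr
          exact key ω h
        · simp
    _ = 2 * ∑ g ∈ GG n M, ∑ ω,
        (if ∀ t ∈ g.2, ∃ h : t.card = 3, ω ⟨t, h⟩ = true then wt n p ω else 0) := by
        rw [Finset.sum_comm, Finset.mul_sum]
        refine Finset.sum_congr rfl fun ω _ => ?_
        rw [mul_assoc, Finset.sum_mul]
        simp only [ite_mul, one_mul, zero_mul]
    _ ≤ _ := by
        gcongr with g hg
        refine prob_contains n p hp g.2 ?_
        have := (Finset.mem_filter.1 hg).2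
        exact this.2.1.1.1

lemma lmProb_compl (n : ℕ) (p : ℝ≥0∞) (hp : p ≤ 1) (E : Set (Tri n → Bool)) :
    lmProb n p E = 1 - lmProb n p Eᶜ := by
  classical
  have : lmProb n p E + lmProb n p Eᶜ = 1 := by
    rw [lmProb_eq, lmProb_eq, ← Finset.sum_add_distrib, ← wt_total n p hp]
    refine Finset.sum_congr rfl fun ω _ => ?_
    by_cases h : ω ∈ E <;> simp [h]
  refine ENNReal.eq_sub_of_add_eq ?_ this
  intro h; rw [h] at this; simp at this


/-! ### Part 5: estimates -/

lemma sq_le_four_pow (m : ℕ) : ((m : ℝ) + 4) ^ 2 ≤ 16 * 4 ^ m := by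
  induction m with
  | zero => norm_num
  | succ m ih =>
    push_cast
    rw [pow_succ (4 : ℝ) m]
    have : (0 : ℝ) ≤ m := Nat.cast_nonneg m
    nlinarith

lemma term_bound {n m : ℕ} (hn : 1 ≤ n) (p M h : ℝ) (hp : 0 ≤ p)
    (hm : (m : ℝ) < M) (hh : √(n + M + 3) * p = h) (h512 : h ≤ 1 / 512) :
    ((n * 4 ^ (m + 2)) * (16 ^ (m + 3) * (√(n + (m + 3 : ℕ))) ^ (m + 3))) * p ^ m ≤
      2 ^ 20 * (n ^ 2 * √n) * (1 / 2) ^ m := by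
  have hn' : (1 : ℝ) ≤ n := by exact_mod_cast hn
  have hm0 : (0 : ℝ) ≤ m := Nat.cast_nonneg m
  set g := √((n : ℝ) + (m + 3 : ℕ)) with hg
  have hg0 : 0 ≤ g := Real.sqrt_nonneg _
  have h1 : g * p ≤ 1 / 512 := by
    refine le_trans ?_ (hh.le.trans h512)
    gcongr
    rw [hg]
    refine Real.sqrt_le_sqrt ?_
    push_cast; linarith
  have h2 : g ≤ √n * √(m + 4) := by
    rw [hg, ← Real.sqrt_mul (by positivity)]
    refine Real.sqrt_le_sqrt ?_
    push_cast; nlinarith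
  have h3 : g ^ 3 ≤ (n * √n) * (16 * 4 ^ m) := by
    calc g ^ 3 ≤ (√n * √(m + 4)) ^ 3 := by gcongr
      _ = (√n) ^ 2 * √n * ((√(m + 4)) ^ 2 * √(m + 4)) := by ring
      _ = n * √n * ((m + 4) * √(m + 4)) := by
          rw [Real.sq_sqrt (by positivity), Real.sq_sqrt (by positivity)]
      _ ≤ n * √n * (16 * 4 ^ m) := by
          refine mul_le_mul_of_nonneg_left ?_ (by positivity)
          refine le_trans ?_ (sq_le_four_pow m)
          rw [sq]
          refine mul_le_mul_of_nonneg_left ?_ (by positivity)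
          rw [Real.sqrt_le_left (by positivity)]
          nlinarith
  calc ((n * 4 ^ (m + 2)) * (16 ^ (m + 3) * g ^ (m + 3))) * p ^ m
      = (n * 4 ^ (m + 2) * 16 ^ (m + 3)) * g ^ 3 * (g * p) ^ m := by
        rw [mul_pow]; ring
    _ ≤ (n * 4 ^ (m + 2) * 16 ^ (m + 3)) * ((n * √n) * (16 * 4 ^ m)) * (1 / 512) ^ m := by
        gcongr
    _ = 2 ^ 20 * (n ^ 2 * √n) * ((4 * 16 * 4 * (1 / 512)) ^ m) := by
        rw [mul_pow, mul_pow, mul_pow]; ring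
    _ = 2 ^ 20 * (n ^ 2 * √n) * (1 / 2) ^ m := by norm_num

lemma sum_GG_le {n : ℕ} (hn : 1 ≤ n) (p M h : ℝ) (hp : 0 ≤ p) (hM : 0 < M)
    (hh : √(n + M + 3) * p = h) (h512 : h ≤ 1 / 512) :
    ∑ g ∈ GG n (ENNReal.ofReal M), p ^ g.2.card ≤ 2 ^ 21 * (n ^ 2 * √n) := by
  classical
  have hlt : ∀ g ∈ GG n (ENNReal.ofReal M), (g.2.card : ℝ) < M := by
    intro g hg
    have := (Finset.mem_filter.1 hg).2.2.2
    rw [← ENNReal.ofReal_natCast, ENNReal.ofReal_lt_ofReal_iff hM] at this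
    exact this
  rw [← Finset.sum_fiberwise_of_maps_to (s := GG n (ENNReal.ofReal M)) (t := Finset.range ⌈M⌉₊)
    (g := fun g => g.2.card) (by
      intro g hg
      exact Finset.mem_range.2 (Nat.lt_ceil.2 (hlt g hg)))]
  have h1 : ∀ m ∈ Finset.range ⌈M⌉₊,
      ∑ g ∈ (GG n (ENNReal.ofReal M)).filter (fun g => g.2.card = m), p ^ g.2.card ≤
        2 ^ 20 * (n ^ 2 * √n) * (1 / 2) ^ m := by
    intro m hm
    have hm' := Nat.lt_ceil.1 (Finset.mem_range.1 hm)
    refine le_trans ?_ (term_bound hn p M h hp hm' hh h512)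
    rw [Finset.sum_congr rfl (g := fun _ => p ^ m)
      (fun g hg => by rw [(Finset.mem_filter.1 hg).2]), Finset.sum_const, nsmul_eq_mul]
    gcongr
    refine count_fillings m _ ?_
    intro f hf
    obtain ⟨hf1, hf2⟩ := Finset.mem_filter.1 hf
    have := (Finset.mem_filter.1 hf1).2
    exact ⟨this.1, this.2.1, hf2⟩
  refine (Finset.sum_le_sum h1).trans ?_
  rw [← Finset.mul_sum]
  have h2 : ∑ m ∈ Finset.range ⌈M⌉₊, ((1 : ℝ) / 2) ^ m ≤ 2 := sum_geometric_two_le _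
  have h3 : (0 : ℝ) ≤ 2 ^ 20 * (n ^ 2 * √n) := by positivity
  nlinarith

lemma choose_three_ge {n : ℕ} (hn : 3 ≤ n) : (n : ℝ) ^ 3 / 162 ≤ n.choose 3 := by
  have h := Nat.pow_le_choose (α := ℝ) 3 n
  refine le_trans ?_ h
  have h1 : (n : ℝ) / 3 ≤ ((n + 1 - 3 : ℕ) : ℝ) := by
    rw [Nat.cast_sub (by omega)]; push_cast
    have : (3 : ℝ) ≤ n := by exact_mod_cast hn
    linarith
  have h2 : ((Nat.factorial 3 : ℕ) : ℝ) = 6 := by norm_num [Nat.factorial]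
  rw [h2]
  calc (n : ℝ) ^ 3 / 162 = ((n : ℝ) / 3) ^ 3 / 6 := by ring
    _ ≤ _ := by gcongr

lemma bad_bound {n : ℕ} (hn : 3 ≤ n) (p M h : ℝ) (N : ℝ≥0∞) (hp : 0 ≤ p) (hp1 : p ≤ 1) (hM : 0 < M)
    (hh : √(n + M + 3) * p = h) (h512 : h ≤ 1 / 512) (hMN : 2 * N ^ 2 ≤ (ENNReal.ofReal M) ^ 2) :
    lmProb n (ENNReal.ofReal p) {ω | (n.choose 3 : ℝ≥0∞) * N ^ 2 ≤
          ∑ τ ∈ (Finset.univ : Finset (Fin n)).powersetCard 3,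
            ((fill n ω τ : ℕ∞) : ℝ≥0∞) ^ 2}ᶜ ≤ ENNReal.ofReal (2 ^ 22 * 162 / √n) := by
  have h1 := markov n (ENNReal.ofReal p) (ENNReal.ofReal M) N (by simpa using hp1) hMN
  have h2 : ∑ g ∈ GG n (ENNReal.ofReal M), (ENNReal.ofReal p) ^ g.2.card ≤
      ENNReal.ofReal (2 ^ 21 * (n ^ 2 * √n)) := by
    refine le_trans (le_of_eq ?_) (ENNReal.ofReal_le_ofReal (sum_GG_le (by omega) p M h hp hM hh h512))
    rw [ENNReal.ofReal_sum_of_nonneg (fun _ _ => by positivity)]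
    exact Finset.sum_congr rfl fun g _ => (ENNReal.ofReal_pow hp _).symm
  set x := lmProb n (ENNReal.ofReal p) {ω | (n.choose 3 : ℝ≥0∞) * N ^ 2 ≤
          ∑ τ ∈ (Finset.univ : Finset (Fin n)).powersetCard 3,
            ((fill n ω τ : ℕ∞) : ℝ≥0∞) ^ 2}ᶜ
  have hn0 : (0 : ℝ) < n := by exact_mod_cast (by omega : 0 < n)
  have h3 : ENNReal.ofReal ((n : ℝ) ^ 3 / 162) ≤ (n.choose 3 : ℝ≥0∞) := by
    rw [← ENNReal.ofReal_natCast]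
    exact ENNReal.ofReal_le_ofReal (choose_three_ge hn)
  have h4 : ENNReal.ofReal ((n : ℝ) ^ 3 / 162) * x ≤ ENNReal.ofReal (2 ^ 22 * (n ^ 2 * √n)) := by
    calc _ ≤ (n.choose 3 : ℝ≥0∞) * x := by gcongr
      _ ≤ 2 * ENNReal.ofReal (2 ^ 21 * (n ^ 2 * √n)) := h1.trans (by gcongr)
      _ = _ := by
        rw [show (2 : ℝ≥0∞) = ENNReal.ofReal 2 by simp, ← ENNReal.ofReal_mul (by norm_num)]
        congr 1; ring
  have hpos : 0 < (n : ℝ) ^ 3 / 162 := by positivity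
  have h5 : ENNReal.ofReal (2 ^ 22 * (n ^ 2 * √n)) =
      ENNReal.ofReal ((n : ℝ) ^ 3 / 162) * ENNReal.ofReal (2 ^ 22 * 162 / √n) := by
    rw [← ENNReal.ofReal_mul hpos.le]
    congr 1
    have hs : √(n : ℝ) * √n = n := Real.mul_self_sqrt hn0.le
    have hs0 : 0 < √(n : ℝ) := Real.sqrt_pos.2 hn0
    field_simp
    rw [sq, hs]
  rw [h5] at h4
  exact (ENNReal.mul_le_mul_iff_right (by simpa using hpos) ENNReal.ofReal_ne_top).1 h4

open Filter Topology in
lemma tendsto_h (α ε : ℝ) (hα : α < 1 / 2) (hε : 0 < ε) :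
    Tendsto (fun n : ℕ => √((n : ℝ) + (n : ℝ) ^ (2 - 2 * α - ε / 2) + 3) * (n : ℝ) ^ (α - 1))
      atTop (𝓝 0) := by
  have key : Tendsto (fun n : ℕ => √((n : ℝ) ^ (-(1 - 2 * α)) + (n : ℝ) ^ (-(ε / 2)) +
      3 * (n : ℝ) ^ (-(2 - 2 * α)))) atTop (𝓝 0) := by
    have h1 := (tendsto_rpow_neg_atTop (y := 1 - 2 * α) (by linarith)).comp
      (tendsto_natCast_atTop_atTop (R := ℝ))
    have h2 := (tendsto_rpow_neg_atTop (y := ε / 2) (by linarith)).comp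
      (tendsto_natCast_atTop_atTop (R := ℝ))
    have h3 := (tendsto_rpow_neg_atTop (y := 2 - 2 * α) (by linarith)).comp
      (tendsto_natCast_atTop_atTop (R := ℝ))
    have := ((h1.add h2).add (h3.const_mul 3)).sqrt
    simpa using this
  refine key.congr' ?_
  filter_upwards [eventually_ge_atTop 1] with n hn
  have hn0 : (0 : ℝ) < n := by exact_mod_cast hn
  have e : (n : ℝ) ^ (α - 1) = √((n : ℝ) ^ (2 * α - 2)) := by
    rw [Real.sqrt_eq_rpow, ← Real.rpow_mul hn0.le]; congr 1; ring
  rw [e, ← Real.sqrt_mul (by positivity)]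
  congr 1
  have e1 : (n : ℝ) * (n : ℝ) ^ (2 * α - 2) = (n : ℝ) ^ (-(1 - 2 * α)) := by
    nth_rewrite 1 [← Real.rpow_one (n : ℝ)]
    rw [← Real.rpow_add hn0]; congr 1; ring
  have e2 : (n : ℝ) ^ (2 - 2 * α - ε / 2) * (n : ℝ) ^ (2 * α - 2) = (n : ℝ) ^ (-(ε / 2)) := by
    rw [← Real.rpow_add hn0]; congr 1; ring
  have e3 : (n : ℝ) ^ (2 * α - 2) = (n : ℝ) ^ (-(2 - 2 * α)) := by
    congr 1; ring
  rw [add_mul, add_mul, e1, e2, e3]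

open Filter Topology in
lemma main_aux (α ε : ℝ) (hα0 : 0 < α) (hα : α < 1 / 2) (hε : 0 < ε) :
    Tendsto (fun n : ℕ =>
      lmProb n ((n : ℝ≥0∞) ^ (α - 1))
        {ω | (n.choose 3 : ℝ≥0∞) * ((n : ℝ≥0∞) ^ (2 - 2 * α - ε)) ^ 2 ≤
          ∑ τ ∈ (Finset.univ : Finset (Fin n)).powersetCard 3,
            ((fill n ω τ : ℕ∞) : ℝ≥0∞) ^ 2}ᶜ)
      atTop (𝓝 0) := by
  have hlim : Tendsto (fun n : ℕ => ENNReal.ofReal (2 ^ 22 * 162 / √(n : ℝ))) atTop (𝓝 0) := by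
    rw [← ENNReal.ofReal_zero]
    refine ENNReal.tendsto_ofReal ?_
    exact Tendsto.div_atTop tendsto_const_nhds
      (Real.tendsto_sqrt_atTop.comp tendsto_natCast_atTop_atTop)
  have hN : ∀ᶠ n : ℕ in atTop, (2 : ℝ) ≤ (n : ℝ) ^ ε :=
    ((tendsto_rpow_atTop hε).comp (tendsto_natCast_atTop_atTop (R := ℝ))).eventually_ge_atTop 2
  have hh : ∀ᶠ n : ℕ in atTop,
      √((n : ℝ) + (n : ℝ) ^ (2 - 2 * α - ε / 2) + 3) * (n : ℝ) ^ (α - 1) ≤ 1 / 512 :=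
    (tendsto_h α ε hα hε).eventually_le_const (by norm_num)
  refine tendsto_of_tendsto_of_tendsto_of_le_of_le' tendsto_const_nhds hlim
    (Eventually.of_forall fun _ => zero_le) ?_
  filter_upwards [eventually_ge_atTop 3, hN, hh] with n hn hN hh
  have hn0 : (0 : ℝ) < n := by exact_mod_cast (by omega : 0 < n)
  have hn1 : (1 : ℝ) ≤ n := by exact_mod_cast (by omega : 1 ≤ n)
  have e : ∀ x : ℝ, (n : ℝ≥0∞) ^ x = ENNReal.ofReal ((n : ℝ) ^ x) := by
    intro x
    rw [← ENNReal.ofReal_rpow_of_pos hn0, ENNReal.ofReal_natCast]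
  rw [e, e]
  refine bad_bound hn _ ((n : ℝ) ^ (2 - 2 * α - ε / 2)) _ _ (by positivity)
    (Real.rpow_le_one_of_one_le_of_nonpos hn1 (by linarith)) (by positivity) rfl hh ?_
  rw [← ENNReal.ofReal_pow (by positivity), ← ENNReal.ofReal_pow (by positivity),
    show (2 : ℝ≥0∞) = ENNReal.ofReal 2 by simp, ← ENNReal.ofReal_mul (by norm_num)]
  refine ENNReal.ofReal_le_ofReal ?_
  have : ((n : ℝ) ^ (2 - 2 * α - ε / 2)) ^ 2 = (n : ℝ) ^ ε * ((n : ℝ) ^ (2 - 2 * α - ε)) ^ 2 := by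
    rw [← Real.rpow_natCast, ← Real.rpow_natCast, ← Real.rpow_mul hn0.le, ← Real.rpow_mul hn0.le,
      ← Real.rpow_add hn0]
    congr 1; push_cast; ring
  rw [this]
  gcongr


/-- **Proposition (sum of squared filling areas).**
Let `0 < α < 1/2`, `ε > 0`, and `p = n^(α-1)`. With high probability,
`Σ_τ (Fill_Y(τ))² ≥ C(n,3)·(n^(2-2α-ε))²`, the sum over all 3-element subsets `τ`
of the vertex set, taken in the extended nonnegative reals. -/
theorem sum_sq_fill_whp (α ε : ℝ) (hα0 : 0 < α) (hα : α < 1 / 2) (hε : 0 < ε) :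
    Filter.Tendsto (fun n : ℕ =>
      lmProb n ((n : ℝ≥0∞) ^ (α - 1))
        {ω | (n.choose 3 : ℝ≥0∞) * ((n : ℝ≥0∞) ^ (2 - 2 * α - ε)) ^ 2 ≤
          ∑ τ ∈ (Finset.univ : Finset (Fin n)).powersetCard 3,
            ((fill n ω τ : ℕ∞) : ℝ≥0∞) ^ 2})
      Filter.atTop (nhds 1) := by
  have h := ENNReal.Tendsto.sub (tendsto_const_nhds (x := (1 : ℝ≥0∞)))
    (main_aux α ε hα0 hα hε) (Or.inl ENNReal.one_ne_top)
  rw [tsub_zero] at h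
  refine h.congr' ?_
  filter_upwards [Filter.eventually_ge_atTop 1] with n hn
  refine (lmProb_compl n _ ?_ _).symm
  have hn1 : (1 : ℝ≥0∞) ≤ n := by exact_mod_cast hn
  exact ENNReal.rpow_le_one_of_one_le_of_neg hn1 (by linarith)
end
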